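/- arXiv:2111.10126 — 9 statements merged into one kernel-verified Lean document; each statement's English description precedes it below -/
import Mathlib

section
/- Let ℓ, k, t be positive integers, let F be a finite field, and let b be a positive integer with b > ℓ/k. There is a t-private, k-server linear HSS for CONCAT_ℓ(F) with all output shares in F^b (and hence download rate ℓ/(kb)) if and only if there is an F-linear code C ⊆ (F^b)^k with dim_F(C) ≥ ℓ (i.e., rate at least ℓ/(kb)) and block distance at least t+1. Moreover, in the 'if' direction, the HSS can be taken so that Share is t-private k-party CNF sharing, with total upload cost k·ℓ·binom(k−1,t)·log₂|F| bits. -/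
/-!
Both sides are equivalent to the existence of a linear decoder `R : (F^b)^k → F^ℓ` that stays
surjective on the words vanishing on any given set of at most `t` blocks.

For the reconstruction map of an HSS this is privacy: a coalition `T` of at most `t` servers may see
the view of the secrets `0` while the secrets are `z`, and the difference of the two corresponding
words of output shares vanishes on `T` and decodes to `z`.  Conversely, given such a decoder, the
servers outside a `t`-set `S` all know the additive CNF shares indexed by `S`, so they can jointly
output a preimage of these shares that vanishes on `S`; summing over `S` gives a preimage of the
secrets.

Dually, `R` is surjective on the words vanishing on `S` iff no nonzero combination of the rows of
`R` is supported on `S`, so the decoders in question are those whose rows are independent and span a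
code of block distance greater than `t`.
-/

open scoped BigOperators

/-- The index type for the `t`-element subsets of `[k]`. -/
abbrev TSubset (k t : ℕ) : Type := {S : Finset (Fin k) // S.card = t}

/-- A `t`-private `k`-server linear HSS for `CONCAT_ℓ(F)` with all output shares in `F^b`:
an `F`-linear sharing map applied independently (with independent uniform randomness) to each
of the `ℓ` inputs, arbitrary evaluation functions, and an `F`-linear reconstruction map,
satisfying perfect correctness and perfect `t`-privacy (identical view distributions,
expressed by counting randomness values leading to each view). -/
def IsLinearHSSForConcat (F : Type) [Field F] [Fintype F] (ℓ k t b : ℕ) : Prop :=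
  ∃ (e : ℕ) (c : Fin k → ℕ)
    (Share : (F × (Fin e → F)) →ₗ[F] (∀ j : Fin k, Fin (c j) → F))
    (Eval : ∀ j : Fin k, (Fin ℓ → (Fin (c j) → F)) → (Fin b → F))
    (Rec : (Fin k → (Fin b → F)) →ₗ[F] (Fin ℓ → F)),
    (∀ (x : Fin ℓ → F) (r : Fin ℓ → (Fin e → F)),
      Rec (fun j => Eval j (fun i => Share (x i, r i) j)) = x) ∧
    (∀ T : Finset (Fin k), T.card ≤ t → ∀ x x' : F,
      ∀ v : ∀ j : ↥T, Fin (c j.1) → F,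
        Nat.card {r : Fin e → F // (fun j : ↥T => Share (x, r) j.1) = v} =
          Nat.card {r : Fin e → F // (fun j : ↥T => Share (x', r) j.1) = v})

/-- An `F`-linear code `C ⊆ (F^b)^k` with `dim_F C ≥ ℓ` (rate at least `ℓ/(kb)`) and
block distance at least `dist`. -/
def IsGoodCode (F : Type) [Field F] [Fintype F] (k b ℓ dist : ℕ) : Prop :=
  ∃ C : Submodule F (Fin k → (Fin b → F)),
    ℓ ≤ Module.finrank F C ∧
    ∀ c ∈ C, ∀ c' ∈ C, c ≠ c' → dist ≤ Nat.card {j : Fin k // c j ≠ c' j}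

/-- A `k`-server HSS for `CONCAT_ℓ(F)` whose sharing is `t`-private `k`-party CNF sharing,
with output shares in `F^b`: correctness holds for every additive sharing of each input over
the `t`-subsets of `[k]`, party `j` seeing exactly the shares indexed by subsets not
containing `j`. -/
def IsCNFLinearHSSForConcat (F : Type) [Field F] [Fintype F] (ℓ k t b : ℕ) : Prop :=
  ∃ (Eval : ∀ j : Fin k, (Fin ℓ → ({S : TSubset k t // j ∉ S.1} → F)) → (Fin b → F))
    (Rec : (Fin k → (Fin b → F)) →ₗ[F] (Fin ℓ → F)),
    ∀ (x : Fin ℓ → F) (xs : Fin ℓ → TSubset k t → F),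
      (∀ i, ∑ S, xs i S = x i) →
      Rec (fun j => Eval j (fun i S => xs i S.1)) = x

/-- `t`-privacy of `t`-private `k`-party CNF sharing: for any coalition `T` of at most `t`
parties, the joint view (the shares indexed by subsets missed by some member of `T`) has the
same distribution for any two secrets, the additive shares being uniform conditioned on
summing to the secret. -/
def CNFPrivate (F : Type) [Field F] [Fintype F] (k t : ℕ) : Prop :=
  ∀ T : Finset (Fin k), T.card ≤ t → ∀ x x' : F,
    ∀ v : {S : TSubset k t // ∃ j ∈ T, j ∉ S.1} → F,
      Nat.card {xs : TSubset k t → F //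
          (∑ S, xs S = x) ∧ ∀ S : {S : TSubset k t // ∃ j ∈ T, j ∉ S.1}, xs S.1 = v S} =
        Nat.card {xs : TSubset k t → F //
          (∑ S, xs S = x') ∧ ∀ S : {S : TSubset k t // ∃ j ∈ T, j ∉ S.1}, xs S.1 = v S}

open Finset Module

section ErasureResilience

variable {K ι W : Type*} {V : ι → Type*}

/-- A linear decoder is resilient to `t` erasures if it still reaches every output when any `t`
blocks of its input are required to vanish.  This is the common reformulation of the reconstruction
maps of `t`-private schemes and of the codes of block distance greater than `t`. -/
def IsErasureResilient [Semiring K] [∀ j, AddCommMonoid (V j)] [∀ j, Module K (V j)]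
    [AddCommMonoid W] [Module K W] (R : (∀ j, V j) →ₗ[K] W) (t : ℕ) : Prop :=
  ∀ S : Finset ι, #S ≤ t → ∀ w, ∃ y, (∀ j ∈ S, y j = 0) ∧ R y = w

lemma IsErasureResilient.lt_card [Fintype ι] [Semiring K] [∀ j, AddCommMonoid (V j)]
    [∀ j, Module K (V j)] [AddCommMonoid W] [Module K W] [Nontrivial W]
    {R : (∀ j, V j) →ₗ[K] W} {t : ℕ} (resilient : IsErasureResilient R t) :
    t < Fintype.card ι := by
  by_contra! hcard
  obtain ⟨w, hw⟩ := exists_ne (0 : W)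
  obtain ⟨y, hy, rfl⟩ := resilient univ hcard w
  have : y = 0 := funext fun j => hy j (mem_univ j)
  exact hw (this ▸ map_zero R)

lemma pi_bot_le_ker_iff [Finite ι] [DecidableEq ι] [Semiring K] [∀ j, AddCommMonoid (V j)]
    [∀ j, Module K (V j)] [AddCommMonoid W] [Module K W] (S : Set ι) (f : (∀ j, V j) →ₗ[K] W) :
    Submodule.pi S (fun _ => ⊥) ≤ LinearMap.ker f ↔
      ∀ j ∉ S, f ∘ₗ LinearMap.single K V j = 0 := by
  cases nonempty_fintype ι
  constructor
  · intro hf j hj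
    ext v
    refine hf (Submodule.mem_pi.mpr fun i hi => ?_)
    exact Pi.single_eq_of_ne (ne_of_mem_of_not_mem hi hj) v
  · intro hf y hy
    rw [LinearMap.mem_ker, ← univ_sum_single y, map_sum]
    refine sum_eq_zero fun j _ => ?_
    by_cases hj : j ∈ S
    · rw [(Submodule.mem_bot K).mp (Submodule.mem_pi.mp hy j hj), Pi.single_zero, map_zero]
    · exact LinearMap.congr_fun (hf j hj) (y j)

lemma submodule_map_eq_top_iff_forall_dual [Field K] {E : Type*} [AddCommGroup E] [Module K E]
    [AddCommGroup W] [Module K W] (R : E →ₗ[K] W) (P : Submodule K E) :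
    P.map R = ⊤ ↔ ∀ φ : Dual K W, P ≤ LinearMap.ker (φ ∘ₗ R) → φ = 0 := by
  rw [← Subspace.dualAnnihilator_inj, Submodule.dualAnnihilator_top, Submodule.eq_bot_iff]
  simp only [Submodule.mem_dualAnnihilator, Submodule.mem_map, forall_exists_index, and_imp,
    forall_apply_eq_imp_iff₂, SetLike.le_def, LinearMap.mem_ker, LinearMap.comp_apply]

lemma isErasureResilient_iff_forall_dual [Finite ι] [DecidableEq ι] [Field K]
    [∀ j, AddCommGroup (V j)] [∀ j, Module K (V j)] [AddCommGroup W] [Module K W]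
    (R : (∀ j, V j) →ₗ[K] W) (t : ℕ) :
    IsErasureResilient R t ↔ ∀ S : Finset ι, #S ≤ t → ∀ φ : Dual K W,
      (∀ j ∉ S, (φ ∘ₗ R) ∘ₗ LinearMap.single K V j = 0) → φ = 0 := by
  refine forall₂_congr fun S _ => ?_
  simp_rw [← mem_coe (s := S), ← pi_bot_le_ker_iff, ← submodule_map_eq_top_iff_forall_dual,
    Submodule.eq_top_iff', Submodule.mem_map, Submodule.mem_pi, Submodule.mem_bot]

end ErasureResilience

lemma hammingNorm_le_iff_exists_finset {ι : Type*} [Fintype ι] {α : ι → Type*}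
    [∀ j, Zero (α j)] [∀ j, DecidableEq (α j)] (x : ∀ j, α j) (t : ℕ) :
    hammingNorm x ≤ t ↔ ∃ S : Finset ι, #S ≤ t ∧ ∀ j ∉ S, x j = 0 := by
  constructor
  · exact fun hx => ⟨({j | x j ≠ 0} : Finset ι), hx, by simp⟩
  · rintro ⟨S, hS, hx⟩
    refine (card_le_card fun j hj => ?_).trans hS
    by_contra hjS
    exact (mem_filter.mp hj).2 (hx j hjS)

section RowDecoder

variable {K ι κ β : Type*} [Fintype ι] [DecidableEq ι] [Fintype β] [DecidableEq β]

section CommSemiring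

variable [CommSemiring K]

variable (K ι β) in
/-- The identification of `(K^β)^ι` with its dual through the pairing
`⟨c, y⟩ = ∑ j, c j ⬝ᵥ y j`. -/
def blockPairing : (ι → β → K) ≃ₗ[K] Dual K (ι → β → K) :=
  LinearEquiv.piCongrRight (fun _ => dotProductEquiv K β) ≪≫ₗ LinearMap.lsum K (fun _ => β → K) K

lemma blockPairing_comp_single_eq_zero_iff (c : ι → β → K) (j : ι) :
    blockPairing K ι β c ∘ₗ LinearMap.single K (fun _ => β → K) j = 0 ↔ c j = 0 := by
  have block_eq : blockPairing K ι β c ∘ₗ LinearMap.single K (fun _ => β → K) j =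
      dotProductEquiv K β (c j) :=
    LinearMap.ext fun y =>
      LinearMap.lsum_piSingle K (fun _ => β → K) K (fun i => dotProductEquiv K β (c i)) j y
  rw [block_eq, LinearEquiv.map_eq_zero_iff]

/-- The decoder `(K^β)^ι → K^κ` whose rows are the words `v i`. -/
def rowDecoder (v : κ → ι → β → K) : (ι → β → K) →ₗ[K] (κ → K) :=
  LinearMap.pi fun i => blockPairing K ι β (v i)

lemma rowDecoder_surjective :
    Function.Surjective (rowDecoder : (κ → ι → β → K) → (ι → β → K) →ₗ[K] (κ → K)) := by
  intro R
  refine ⟨fun i => (blockPairing K ι β).symm (LinearMap.proj i ∘ₗ R), ?_⟩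
  ext y i
  simp [rowDecoder]

lemma dotProductEquiv_comp_rowDecoder [Fintype κ] [DecidableEq κ] (v : κ → ι → β → K) (μ : κ → K) :
    dotProductEquiv K κ μ ∘ₗ rowDecoder v = blockPairing K ι β (∑ i, μ i • v i) := by
  refine LinearMap.ext fun y => ?_
  simp [rowDecoder, dotProduct]

end CommSemiring

lemma isErasureResilient_rowDecoder_iff [Fintype κ] [Field K] [DecidableEq K]
    (v : κ → ι → β → K) (t : ℕ) :
    IsErasureResilient (rowDecoder v) t ↔
      ∀ μ : κ → K, μ ≠ 0 → t < hammingNorm (∑ i, μ i • v i) := by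
  classical
  simp_rw [isErasureResilient_iff_forall_dual, (dotProductEquiv K κ).surjective.forall,
    dotProductEquiv_comp_rowDecoder, blockPairing_comp_single_eq_zero_iff,
    LinearEquiv.map_eq_zero_iff]
  simp_rw [← not_le, hammingNorm_le_iff_exists_finset]
  exact ⟨fun h μ hμ ⟨S, hS, vanish⟩ => hμ (h S hS μ vanish),
    fun h S hS μ vanish => by_contra fun hμ => h μ hμ ⟨S, hS, vanish⟩⟩

end RowDecoder

lemma isGoodCode_succ_iff_exists_rows (F : Type) [Field F] [Fintype F] [DecidableEq F]
    (k b ℓ t : ℕ) :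
    IsGoodCode F k b ℓ (t + 1) ↔ ∃ v : Fin ℓ → Fin k → Fin b → F,
      ∀ μ : Fin ℓ → F, μ ≠ 0 → t < hammingNorm (∑ i, μ i • v i) := by
  have card_ne_eq (c c' : Fin k → Fin b → F) :
      Nat.card {j : Fin k // c j ≠ c' j} = hammingNorm (c' - c) := by
    rw [← neg_add_eq_sub, ← hammingDist_eq_hammingNorm]
    exact Nat.subtype_card _ (by simp)
  simp_rw [IsGoodCode, card_ne_eq, Nat.succ_le_iff]
  constructor
  · rintro ⟨C, hC, hdist⟩
    obtain ⟨v, hv⟩ := exists_linearIndependent_of_le_finrank hC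
    refine ⟨fun i => v i, fun μ hμ => ?_⟩
    have comb_ne_zero : ∑ i, μ i • v i ≠ 0 := fun h =>
      hμ (funext (Fintype.linearIndependent_iff.mp hv μ h))
    simpa using hdist 0 C.zero_mem _ (∑ i, μ i • v i).2 (Subtype.coe_ne_coe.mpr comb_ne_zero.symm)
  · rintro ⟨v, hv⟩
    have independent : LinearIndependent F v := by
      refine Fintype.linearIndependent_iff.mpr fun μ hμ => ?_
      by_contra! hne
      simpa [hμ] using hv μ (Function.ne_iff.mpr hne)
    refine ⟨Submodule.span F (Set.range v), ?_, fun c hc c' hc' hne => ?_⟩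
    · rw [finrank_span_eq_card independent, Fintype.card_fin]
    · obtain ⟨μ, hμ⟩ := (Submodule.mem_span_range_iff_exists_fun F).mp (sub_mem hc' hc)
      rw [← hμ]
      refine hv μ fun h => sub_ne_zero.mpr hne.symm ?_
      simp [← hμ, h]

lemma exists_isErasureResilient_iff_isGoodCode (F : Type) [Field F] [Fintype F] (ℓ k b t : ℕ) :
    (∃ R : (Fin k → Fin b → F) →ₗ[F] (Fin ℓ → F), IsErasureResilient R t) ↔
      IsGoodCode F k b ℓ (t + 1) := by
  classical
  simp_rw [isGoodCode_succ_iff_exists_rows, rowDecoder_surjective.exists,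
    isErasureResilient_rowDecoder_iff]

lemma exists_tSubset_superset {k t : ℕ} (htk : t ≤ k) {T : Finset (Fin k)} (hT : #T ≤ t) :
    ∃ S : TSubset k t, T ⊆ S.1 := by
  obtain ⟨S, hTS, hS⟩ := exists_superset_card_eq hT (htk.trans_eq (Fintype.card_fin k).symm)
  exact ⟨⟨S, hS⟩, hTS⟩

lemma card_tSubset_notMem {k : ℕ} (t : ℕ) (j : Fin k) :
    Nat.card {S : TSubset k t // j ∉ S.1} = (k - 1).choose t := by
  have mem_iff (S : Finset (Fin k)) :
      S ∈ powersetCard t (univ.erase j) ↔ #S = t ∧ j ∉ S := by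
    rw [mem_powersetCard, subset_erase, and_comm]
    simp
  rw [Nat.card_congr (Equiv.subtypeSubtypeEquivSubtypeInter _ fun S => j ∉ S),
    Nat.subtype_card _ mem_iff, card_powersetCard, card_erase_of_mem (mem_univ j), card_fin]

section AdditiveSharing

variable {M σ : Type*} [AddCommGroup M] [Fintype σ] [DecidableEq σ] (K : Type*) [Ring K]
  [Module K M]

/-- Additive sharing as a linear map of the secret and of one uniform random element per share: the
share at `s₀` absorbs the discrepancy, so that the randomness at `s₀` cancels out. -/
def additiveSharing (s₀ : σ) : M × (σ → M) →ₗ[K] σ → M :=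
  LinearMap.snd K M (σ → M) + LinearMap.single K (fun _ => M) s₀ ∘ₗ
    (LinearMap.fst K M (σ → M) - (∑ s, LinearMap.proj s) ∘ₗ LinearMap.snd K M (σ → M))

lemma sum_additiveSharing (s₀ : σ) (x : M) (r : σ → M) :
    ∑ s, additiveSharing K s₀ (x, r) s = x := by
  simp [additiveSharing, sum_add_distrib]

lemma additiveSharing_single (s₀ s : σ) (x : M) :
    additiveSharing K s₀ (x, Pi.single s x) = Pi.single s x := by
  simp [additiveSharing]

end AdditiveSharing

lemma card_view_eq_of_zero_view {A R U : Type*} [AddCommGroup A] [AddGroup R] [AddMonoid U]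
    (view : A × R →+ U) {x x' : A} {mask : R} (zero_view : view (x' - x, mask) = 0) (v : U) :
    Nat.card {r // view (x, r) = v} = Nat.card {r // view (x', r) = v} := by
  refine Nat.card_congr ((Equiv.addRight mask).subtypeEquiv fun r => ?_)
  have : (x', r + mask) = (x, r) + (x' - x, mask) := by simp
  rw [Equiv.coe_addRight, this, map_add, zero_view, add_zero]

section HSS

variable {F : Type} [Field F] [Fintype F] {ℓ k t b : ℕ}

lemma IsLinearHSSForConcat.exists_isErasureResilient (hss : IsLinearHSSForConcat F ℓ k t b) :
    ∃ R : (Fin k → Fin b → F) →ₗ[F] (Fin ℓ → F), IsErasureResilient R t := by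
  obtain ⟨e, c, Share, Eval, Rec, correct, privacy⟩ := hss
  refine ⟨Rec, fun T hT z => ?_⟩
  have exists_same_view (x : F) : ∃ r, ∀ j ∈ T, Share (x, r) j = Share (0, 0) j := by
    let View (x : F) : Type :=
      {r : Fin e → F // (fun j : T => Share (x, r) j.1) = fun j : T => Share (0, 0) j.1}
    have : Nonempty (View 0) := ⟨⟨0, rfl⟩⟩
    have card_pos : 0 < Nat.card (View x) :=
      (privacy T hT 0 x fun j => Share (0, 0) j.1) ▸ Nat.card_pos
    obtain ⟨⟨r, hr⟩⟩ := (Nat.card_pos_iff.mp card_pos).1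
    exact ⟨r, fun j hj => congrFun hr ⟨j, hj⟩⟩
  choose r hr using exists_same_view
  let outputs (x : Fin ℓ → F) (r : Fin ℓ → Fin e → F) (j : Fin k) : Fin b → F :=
    Eval j fun i => Share (x i, r i) j
  refine ⟨outputs z (fun i => r (z i)) - outputs 0 0, fun j hj => ?_, ?_⟩
  · simp [outputs, hr _ j hj]
  · rw [map_sub, correct, correct, sub_zero]

lemma IsErasureResilient.isCNFLinearHSSForConcat
    {R : (Fin k → Fin b → F) →ₗ[F] (Fin ℓ → F)} (resilient : IsErasureResilient R t) :
    IsCNFLinearHSSForConcat F ℓ k t b := by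
  choose preimage preimage_eq_zero map_preimage using
    fun S : TSubset k t => resilient S.1 S.2.le
  refine ⟨fun j shares => ∑ S : {S : TSubset k t // j ∉ S.1}, preimage S (fun i => shares i S) j,
    R, fun x xs hxs => ?_⟩
  have outputs_eq : (fun j => ∑ S : {S : TSubset k t // j ∉ S.1},
      preimage S.1 (fun i => xs i S.1) j) = ∑ S, preimage S fun i => xs i S := by
    ext1 j
    rw [Finset.sum_apply]
    refine Fintype.sum_of_injective _ Subtype.val_injective _ _ (fun S hS => ?_) fun _ => rfl
    exact preimage_eq_zero S _ j (by simpa using hS)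
  rw [outputs_eq, map_sum]
  ext i
  simp [map_preimage, hxs]

/-- The shift witnessing the equality of counts moves only the additive share at a `t`-set
containing the coalition, which the coalition does not see. -/
lemma cnfPrivate_of_le (F : Type) [Field F] [Fintype F] {k t : ℕ} (htk : t ≤ k) :
    CNFPrivate F k t := by
  intro T hT x x' v
  obtain ⟨S₁, hTS⟩ := exists_tSubset_superset htk hT
  let shift : TSubset k t → F := Pi.single S₁ (x' - x)
  refine Nat.card_congr ((Equiv.addRight shift).subtypeEquiv fun xs => ?_)
  have sum_shift : ∑ S, (xs + shift) S = ∑ S, xs S + (x' - x) := by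
    simp [shift, sum_add_distrib]
  have view_shift (S : {S : TSubset k t // ∃ j ∈ T, j ∉ S.1}) : (xs + shift) S.1 = xs S.1 := by
    obtain ⟨S, j, hjT, hjS⟩ := S
    have hne : S ≠ S₁ := fun h => hjS (h ▸ hTS hjT)
    simp [shift, hne]
  simp only [Equiv.coe_addRight, sum_shift, view_shift, ← eq_sub_iff_add_eq, sub_sub_cancel]

lemma isLinearHSSForConcat_of_finite {ρ : Type} [Finite ρ] {σ : Fin k → Type}
    [∀ j, Finite (σ j)] (Share : F × (ρ → F) →ₗ[F] ∀ j, σ j → F)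
    (Eval : ∀ j, (Fin ℓ → σ j → F) → Fin b → F) (Rec : (Fin k → Fin b → F) →ₗ[F] (Fin ℓ → F))
    (correct : ∀ (x : Fin ℓ → F) (r : Fin ℓ → ρ → F),
      Rec (fun j => Eval j fun i => Share (x i, r i) j) = x)
    (exists_zero_view : ∀ T : Finset (Fin k), #T ≤ t → ∀ x, ∃ r, ∀ j ∈ T, Share (x, r) j = 0) :
    IsLinearHSSForConcat F ℓ k t b := by
  let eρ := LinearEquiv.funCongrLeft F F (Finite.equivFin ρ)
  let eσ (j : Fin k) := LinearEquiv.funCongrLeft F F (Finite.equivFin (σ j))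
  let Share' : F × (Fin (Nat.card ρ) → F) →ₗ[F] ∀ j, Fin (Nat.card (σ j)) → F :=
    (LinearEquiv.piCongrRight fun j => (eσ j).symm) ∘ₗ Share ∘ₗ
      LinearMap.id.prodMap eρ.toLinearMap
  have share'_apply (x : F) (r : Fin (Nat.card ρ) → F) (j : Fin k) :
      Share' (x, r) j = (eσ j).symm (Share (x, eρ r) j) := rfl
  refine ⟨_, _, Share', fun j shares => Eval j fun i => eσ j (shares i), Rec, ?_, ?_⟩
  · intro x r
    simpa only [share'_apply, LinearEquiv.apply_symm_apply] using correct x fun i => eρ (r i)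
  · intro T hT x x'
    obtain ⟨mask, hmask⟩ := exists_zero_view T hT (x' - x)
    let view := LinearMap.pi fun j : T => LinearMap.proj j.1 ∘ₗ Share'
    have zero_view : view (x' - x, eρ.symm mask) = 0 := funext fun j => by
      simp [view, share'_apply, hmask j.1 j.2]
    exact card_view_eq_of_zero_view view.toAddMonoidHom zero_view

lemma IsCNFLinearHSSForConcat.isLinearHSSForConcat (cnf : IsCNFLinearHSSForConcat F ℓ k t b)
    (htk : t ≤ k) : IsLinearHSSForConcat F ℓ k t b := by
  obtain ⟨Eval, Rec, correct⟩ := cnf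
  obtain ⟨S₀, -⟩ := exists_tSubset_superset htk (T := ∅) (by simp)
  let Share : F × (TSubset k t → F) →ₗ[F] ∀ j, {S : TSubset k t // j ∉ S.1} → F :=
    LinearMap.pi (fun j => LinearMap.funLeft F F fun S : {S : TSubset k t // j ∉ S.1} => S.1) ∘ₗ
      additiveSharing F S₀
  refine isLinearHSSForConcat_of_finite Share Eval Rec (fun x r => ?_) fun T hT x => ?_
  · exact correct x (fun i => additiveSharing F S₀ (x i, r i)) fun i => sum_additiveSharing F _ _ _
  · obtain ⟨S₁, hTS⟩ := exists_tSubset_superset htk hT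
    refine ⟨Pi.single S₁ x, fun j hj => funext fun S => ?_⟩
    have hne : S.1 ≠ S₁ := fun h => S.2 (h ▸ hTS hj)
    change additiveSharing F S₀ (x, Pi.single S₁ x) S.1 = 0
    rw [additiveSharing_single, Pi.single_eq_of_ne hne]

end HSS

/-- **Download rate of HSS-for-concatenation is captured by the distance of linear codes.**
There is a `t`-private `k`-server linear HSS for `CONCAT_ℓ(F)` with output shares in `F^b`
iff there is an `F`-linear code `C ⊆ (F^b)^k` of dimension at least `ℓ` and block distance
at least `t+1`.  Moreover, in the "if" direction the HSS can be taken with `t`-private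
`k`-party CNF sharing (which is `t`-private), each server receiving `(k-1).choose t` field
elements per input, i.e. total upload cost `k·ℓ·binom(k−1,t)·log₂|F|` bits. -/
theorem linear_hss_for_concat_iff_code (F : Type) [Field F] [Fintype F]
    (ℓ k t b : ℕ) (hℓ : 0 < ℓ) (hk : 0 < k) (ht : 0 < t) (hb : ℓ < b * k) :
    (IsLinearHSSForConcat F ℓ k t b ↔ IsGoodCode F k b ℓ (t + 1)) ∧
    (IsGoodCode F k b ℓ (t + 1) →
      IsCNFLinearHSSForConcat F ℓ k t b ∧ CNFPrivate F k t ∧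
        ∀ j : Fin k, Nat.card {S : TSubset k t // j ∉ S.1} = (k - 1).choose t) := by
  have decoder_iff_code := exists_isErasureResilient_iff_isGoodCode F ℓ k b t
  have cnf_hss : IsGoodCode F k b ℓ (t + 1) → IsCNFLinearHSSForConcat F ℓ k t b := fun code =>
    let ⟨_, resilient⟩ := decoder_iff_code.mpr code
    resilient.isCNFLinearHSSForConcat
  have le_servers : IsGoodCode F k b ℓ (t + 1) → t ≤ k := fun code =>
    have : Nonempty (Fin ℓ) := ⟨⟨0, hℓ⟩⟩
    let ⟨_, resilient⟩ := decoder_iff_code.mpr code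
    (resilient.lt_card.trans_eq (Fintype.card_fin k)).le
  exact
    ⟨⟨fun hss => decoder_iff_code.mp hss.exists_isErasureResilient,
        fun code => (cnf_hss code).isLinearHSSForConcat (le_servers code)⟩,
      fun code => ⟨cnf_hss code, cnfPrivate_of_le F (le_servers code), card_tSubset_notMem t⟩⟩
end

section
/- Let k, t, b, ℓ be positive integers with ℓ < bk and let F be a finite field. There is a t-private k-party ℓ-LMSSS over F with all shares in F^b and with the full party set [k] qualified (in particular, with information rate ℓ/(kb)) if and only if there is an F-linear code C ⊆ (F^b)^k of rate at least ℓ/(kb) (equivalently, dim_F(C) ≥ ℓ) and block distance at least t+1. -/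
/-!
Sharing `x` as a uniformly random element of `R ⁻¹' {x}` is `t`-private as soon as `R` maps the
share vectors vanishing on any `t` given parties onto all secrets: translating by such a vector
changes the secret but not the view of these parties. Conversely, the reconstruction map of a
`t`-private scheme has this property, because some sharing of each `x` must show the parties the
view `0` that they get from `Share 0 = 0`.

A functional `f` on secrets kills the image under `R` of the vectors vanishing on `T` exactly when
`f ∘ R`, regarded as a vector of blocks, is supported on `T`. So the property of `R` says that the
transpose of `R` encodes no nonzero message with weight at most `t`, which makes it an injective
encoder of a linear code of block distance at least `t + 1`. Transposition is a bijection on linear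
maps of finite-dimensional spaces, so every such code arises.
-/

open scoped BigOperators

/-- A `t`-private `k`-party `ℓ`-LMSSS over `F` with all shares in `F^b` and the full party
set `[k]` qualified: an `F`-linear sharing map `Share : F^ℓ × F^e → (F^b)^k` and an
`F`-linear reconstruction map `Rec : (F^b)^k → F^ℓ` with `Rec (Share x r) = x`, such that
any coalition of at most `t` parties sees identically distributed shares for any two
secrets (expressed by counting randomness values leading to each view). -/
def IsLMSSS (F : Type) [Field F] [Fintype F] (k ℓ t b : ℕ) : Prop :=
  ∃ (e : ℕ)
    (Share : ((Fin ℓ → F) × (Fin e → F)) →ₗ[F] (Fin k → (Fin b → F)))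
    (Rec : (Fin k → (Fin b → F)) →ₗ[F] (Fin ℓ → F)),
    (∀ (x : Fin ℓ → F) (r : Fin e → F), Rec (Share (x, r)) = x) ∧
    (∀ T : Finset (Fin k), T.card ≤ t → ∀ x x' : Fin ℓ → F,
      ∀ v : ↥T → (Fin b → F),
        Nat.card {r : Fin e → F // (fun j : ↥T => Share (x, r) j.1) = v} =
          Nat.card {r : Fin e → F // (fun j : ↥T => Share (x', r) j.1) = v})

section Predicates

variable {F ι M : Type*} {V : ι → Type*} [Semiring F] [AddCommMonoid M] [Module F M]
  [∀ i, AddCommMonoid (V i)] [∀ i, Module F (V i)]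

/-- `R` reconstructs every secret from share vectors that vanish on any `t` given parties. This
is the condition on `R` under which sharing `x` uniformly in `R ⁻¹' {x}` is `t`-private. -/
def IsPrivateReconstruction (t : ℕ) (R : (∀ i, V i) →ₗ[F] M) : Prop :=
  ∀ T : Finset ι, T.card ≤ t → (Submodule.pi (T : Set ι) fun _ ↦ (⊥ : Submodule F _)).map R = ⊤

theorem IsPrivateReconstruction.surjective {t : ℕ} {R : (∀ i, V i) →ₗ[F] M}
    (hR : IsPrivateReconstruction t R) : Function.Surjective R := by
  simpa [LinearMap.range_eq_top] using hR ∅ (Nat.zero_le t)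

/-- No nonzero message is encoded by `g` as a word supported on `t` blocks, so that the linear code
with encoder `g` detects every pattern of `t` block errors. Stated for messages rather than
codewords, the condition also makes `g` injective. -/
def DetectsErrors (t : ℕ) (g : M →ₗ[F] ∀ i, V i) : Prop :=
  ∀ T : Finset ι, T.card ≤ t → ∀ y, (∀ i ∉ T, g y i = 0) → y = 0

end Predicates

section Privacy

theorem forall_card_fiber_eq_iff {X Ω Y : Type*} [AddGroup X] [AddGroup Ω] [Finite Ω]
    [AddZeroClass Y] (φ : X × Ω →+ Y) :
    (∀ x x' y, Nat.card {r // φ (x, r) = y} = Nat.card {r // φ (x', r) = y}) ↔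
      ∀ x, ∃ r, φ (x, r) = 0 := by
  constructor
  · intro h x
    have : Nonempty {r // φ (0, r) = 0} := ⟨0, map_zero φ⟩
    have hpos : 0 < Nat.card {r // φ (x, r) = 0} := h 0 x 0 ▸ Nat.card_pos
    obtain ⟨⟨r, hr⟩⟩ := (Nat.card_pos_iff.1 hpos).1
    exact ⟨r, hr⟩
  · intro h x x' y
    obtain ⟨s, hs⟩ := h (-x + x')
    have htranslate (r : Ω) : φ (x', r + s) = φ (x, r) := by
      rw [← add_zero (φ (x, r)), ← hs, ← map_add, Prod.mk_add_mk, add_neg_cancel_left]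
    exact Nat.card_congr ((Equiv.addRight s).subtypeEquiv fun r ↦ by simp [htranslate])

theorem forall_card_view_eq_iff {F ι M Ω : Type*} {V : ι → Type*} [Semiring F] [AddCommGroup M]
    [Module F M] [AddCommGroup Ω] [Module F Ω] [Finite Ω] [∀ i, AddCommMonoid (V i)]
    [∀ i, Module F (V i)] (share : M × Ω →ₗ[F] ∀ i, V i) (T : Finset ι) :
    (∀ x x', ∀ v : ∀ j : T, V j, Nat.card {r // (fun j : T ↦ share (x, r) j) = v} =
        Nat.card {r // (fun j : T ↦ share (x', r) j) = v}) ↔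
      ∀ x, ∃ r, ∀ j ∈ T, share (x, r) j = 0 := by
  let view : M × Ω →ₗ[F] ∀ j : T, V j := LinearMap.pi fun j ↦ LinearMap.proj j.1 ∘ₗ share
  refine (forall_card_fiber_eq_iff view.toAddMonoidHom).trans ?_
  simp [view, funext_iff]

theorem exists_surjective_comp_eq_fst {F E M : Type*} [Ring F] [AddCommGroup E] [Module F E]
    [AddCommGroup M] [Module F M] [Module.Projective F M] {R : E →ₗ[F] M}
    (hR : Function.Surjective R) :
    ∃ S : M × LinearMap.ker R →ₗ[F] E, Function.Surjective S ∧ R ∘ₗ S = LinearMap.fst F M _ := by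
  obtain ⟨s, hs⟩ := Module.projective_lifting_property R LinearMap.id hR
  have hRs (x : M) : R (s x) = x := LinearMap.congr_fun hs x
  refine ⟨s.coprod (LinearMap.ker R).subtype, fun v ↦ ?_, ?_⟩
  · exact ⟨(R v, ⟨v - s (R v), by simp [hRs]⟩), by simp⟩
  · ext <;> simp [hRs]

theorem isLMSSS_iff_exists_isPrivateReconstruction {F : Type} [Field F] [Fintype F]
    {k ℓ t b : ℕ} :
    IsLMSSS F k ℓ t b ↔
      ∃ R : (Fin k → Fin b → F) →ₗ[F] (Fin ℓ → F), IsPrivateReconstruction t R := by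
  constructor
  · rintro ⟨e, share, R, hrec, hpriv⟩
    refine ⟨R, fun T hT ↦ (Submodule.eq_top_iff' ..).2 fun x ↦ ?_⟩
    obtain ⟨r, hr⟩ := (forall_card_view_eq_iff share T).1 (hpriv T hT) x
    exact ⟨share (x, r), hr, hrec x r⟩
  · rintro ⟨R, hR⟩
    obtain ⟨S, hS, hRS⟩ := exists_surjective_comp_eq_fst hR.surjective
    let randomness := (Module.finBasis F (LinearMap.ker R)).equivFun
    let share := S ∘ₗ LinearMap.prodMap LinearMap.id randomness.symm.toLinearMap
    have hrec (x r) : R (share (x, r)) = x := LinearMap.congr_fun hRS (x, randomness.symm r)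
    refine ⟨_, share, R, hrec, fun T hT ↦ (forall_card_view_eq_iff share T).2 fun x ↦ ?_⟩
    obtain ⟨v, hv, rfl⟩ := (Submodule.eq_top_iff' ..).1 (hR T hT) x
    obtain ⟨⟨x, z⟩, rfl⟩ := hS v
    have hx : R (S (x, z)) = x := LinearMap.congr_fun hRS (x, z)
    exact ⟨randomness z, by simpa [share, hx] using hv⟩

end Privacy

section Duality

theorem exists_dualMap_eq {F E M : Type*} [CommSemiring F] [AddCommMonoid E] [Module F E]
    [AddCommMonoid M] [Module F M] [Module.IsReflexive F M]
    (g : Module.Dual F M →ₗ[F] Module.Dual F E) : ∃ R : E →ₗ[F] M, R.dualMap = g := by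
  refine ⟨(Module.evalEquiv F M).symm ∘ₗ g.dualMap ∘ₗ Module.Dual.eval F E, ?_⟩
  ext f v
  simp

theorem lsum_mem_dualAnnihilator_pi_bot_iff {F ι : Type*} {V : ι → Type*} [CommSemiring F]
    [∀ i, AddCommMonoid (V i)] [∀ i, Module F (V i)] [Fintype ι] [DecidableEq ι]
    (u : ∀ i, Module.Dual F (V i)) (T : Set ι) :
    LinearMap.lsum F V F u ∈ (Submodule.pi T fun _ ↦ ⊥).dualAnnihilator ↔ ∀ i ∉ T, u i = 0 := by
  rw [Submodule.mem_dualAnnihilator]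
  constructor
  · intro h i hi
    ext v
    rw [← LinearMap.lsum_piSingle F V F u i v]
    refine h _ fun j hj ↦ ?_
    simp [ne_of_mem_of_not_mem hj hi]
  · intro h v hv
    simp only [LinearMap.lsum_apply, LinearMap.sum_apply, LinearMap.comp_apply,
      LinearMap.proj_apply]
    refine Finset.sum_eq_zero fun i _ ↦ ?_
    by_cases hi : i ∈ T
    · rw [(Submodule.mem_bot F).1 (hv i hi), map_zero]
    · rw [h i hi, LinearMap.zero_apply]

variable {F ι M E : Type*} {V : ι → Type*} [Field F] [AddCommGroup M] [Module F M]
  [AddCommGroup E] [Module F E] [∀ i, AddCommGroup (V i)] [∀ i, Module F (V i)]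

theorem map_eq_top_iff_forall_dualMap_mem_dualAnnihilator (R : E →ₗ[F] M) (W : Submodule F E) :
    W.map R = ⊤ ↔ ∀ f, R.dualMap f ∈ W.dualAnnihilator → f = 0 := by
  rw [← Submodule.dualAnnihilator_eq_bot_iff, Submodule.eq_bot_iff]
  simp [Submodule.mem_dualAnnihilator]

theorem isPrivateReconstruction_iff_detectsErrors [Fintype ι] [DecidableEq ι] {t : ℕ}
    {R : (∀ i, V i) →ₗ[F] M} {g : Module.Dual F M →ₗ[F] ∀ i, Module.Dual F (V i)}
    (hgR : ∀ f, LinearMap.lsum F V F (g f) = R.dualMap f) :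
    IsPrivateReconstruction t R ↔ DetectsErrors t g := by
  refine forall₂_congr fun T _ ↦ ?_
  simp only [map_eq_top_iff_forall_dualMap_mem_dualAnnihilator, ← hgR,
    lsum_mem_dualAnnihilator_pi_bot_iff, Finset.mem_coe]

theorem exists_isPrivateReconstruction_iff_exists_detectsErrors [Finite ι]
    [Module.IsReflexive F M] (t : ℕ) :
    (∃ R : (∀ i, V i) →ₗ[F] M, IsPrivateReconstruction t R) ↔
      ∃ g : Module.Dual F M →ₗ[F] ∀ i, Module.Dual F (V i), DetectsErrors t g := by
  classical
  have := Fintype.ofFinite ι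
  constructor
  · rintro ⟨R, hR⟩
    exact ⟨(LinearMap.lsum F V F (M := F)).symm.toLinearMap ∘ₗ R.dualMap,
      (isPrivateReconstruction_iff_detectsErrors fun f ↦
        (LinearMap.lsum F V F).apply_symm_apply _).1 hR⟩
  · rintro ⟨g, hg⟩
    obtain ⟨R, hR⟩ := exists_dualMap_eq ((LinearMap.lsum F V F).toLinearMap ∘ₗ g)
    exact ⟨R, (isPrivateReconstruction_iff_detectsErrors fun f ↦ by rw [hR]; rfl).2 hg⟩

end Duality

section Codes

variable {F ι M N : Type*} {V W : ι → Type*}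

section Semiring

variable [Semiring F] [AddCommMonoid M] [Module F M]
  [AddCommMonoid N] [Module F N] [∀ i, AddCommMonoid (V i)] [∀ i, Module F (V i)]
  [∀ i, AddCommMonoid (W i)] [∀ i, Module F (W i)]

theorem DetectsErrors.congr {t : ℕ} {g : M →ₗ[F] ∀ i, V i} (hg : DetectsErrors t g)
    (eM : N ≃ₗ[F] M) (eV : ∀ i, V i ≃ₗ[F] W i) :
    DetectsErrors t ((LinearEquiv.piCongrRight eV).toLinearMap ∘ₗ g ∘ₗ eM.toLinearMap) :=
  fun T hT _ hy ↦ eM.map_eq_zero_iff.1 <| hg T hT _ fun i hi ↦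
    (eV i).map_eq_zero_iff.1 (hy i hi)

theorem exists_detectsErrors_congr (t : ℕ) (eM : M ≃ₗ[F] N) (eV : ∀ i, V i ≃ₗ[F] W i) :
    (∃ g : M →ₗ[F] ∀ i, V i, DetectsErrors t g) ↔ ∃ g : N →ₗ[F] ∀ i, W i, DetectsErrors t g :=
  ⟨fun ⟨_, hg⟩ ↦ ⟨_, hg.congr eM.symm eV⟩, fun ⟨_, hg⟩ ↦ ⟨_, hg.congr eM fun i ↦ (eV i).symm⟩⟩

theorem detectsErrors_iff_lt_card_ne_zero [Finite ι] {t : ℕ} {g : M →ₗ[F] ∀ i, V i} :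
    DetectsErrors t g ↔ ∀ y ≠ 0, t < Nat.card {i // g y i ≠ 0} := by
  classical
  have := Fintype.ofFinite ι
  simp only [Nat.card_eq_fintype_card, Fintype.card_subtype]
  constructor
  · intro hg y hy
    by_contra! hle
    exact hy (hg _ hle _ (by simp))
  · intro hg T hT y hy
    by_contra hne
    refine (hg y hne).not_ge ((Finset.card_le_card fun i hi ↦ ?_).trans hT)
    by_contra hiT
    exact (Finset.mem_filter.1 hi).2 (hy i hiT)

end Semiring

theorem DetectsErrors.injective [Ring F] [AddCommGroup M] [Module F M]
    [∀ i, AddCommMonoid (V i)] [∀ i, Module F (V i)] {t : ℕ} {g : M →ₗ[F] ∀ i, V i}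
    (hg : DetectsErrors t g) : Function.Injective g :=
  (injective_iff_map_eq_zero g).2 fun y hy ↦ hg ∅ (Nat.zero_le t) y fun i _ ↦ congrFun hy i

theorem exists_detectsErrors_iff_exists_submodule [Field F] [AddCommGroup M] [Module F M]
    [∀ i, AddCommGroup (V i)] [∀ i, Module F (V i)] [Finite ι] [Module.Finite F M]
    [∀ i, Module.Finite F (V i)] (t : ℕ) :
    (∃ g : M →ₗ[F] ∀ i, V i, DetectsErrors t g) ↔
      ∃ C : Submodule F (∀ i, V i), Module.finrank F M ≤ Module.finrank F C ∧
        ∀ c ∈ C, ∀ c' ∈ C, c ≠ c' → t + 1 ≤ Nat.card {i // c i ≠ c' i} := by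
  constructor
  · rintro ⟨g, hg⟩
    refine ⟨LinearMap.range g, (LinearMap.finrank_range_of_inj hg.injective).ge, ?_⟩
    rintro _ ⟨y, rfl⟩ _ ⟨y', rfl⟩ hne
    have hyy' : y - y' ≠ 0 := sub_ne_zero.2 fun h ↦ hne (congrArg g h)
    simpa [sub_eq_zero] using detectsErrors_iff_lt_card_ne_zero.1 hg _ hyy'
  · rintro ⟨C, hdim, hdist⟩
    obtain ⟨g, hg⟩ := finrank_le_iff_exists_linearMap.1 hdim
    refine ⟨C.subtype ∘ₗ g, detectsErrors_iff_lt_card_ne_zero.2 fun y hy ↦ ?_⟩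
    exact hdist _ (g y).2 0 C.zero_mem (by simpa using (map_ne_zero_iff g hg).2 hy)

theorem isGoodCode_iff_exists_detectsErrors {F : Type} [Field F] [Fintype F] {k ℓ t b : ℕ} :
    IsGoodCode F k b ℓ (t + 1) ↔
      ∃ g : (Fin ℓ → F) →ₗ[F] (Fin k → Fin b → F), DetectsErrors t g := by
  rw [exists_detectsErrors_iff_exists_submodule, Module.finrank_fin_fun, IsGoodCode]

end Codes

/-- There is a `t`-private `k`-party `ℓ`-LMSSS over `F` with all shares in `F^b` and the
full party set qualified (information rate `ℓ/(kb)`) if and only if there is an `F`-linear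
code `C ⊆ (F^b)^k` of dimension at least `ℓ` and block distance at least `t+1`. -/
theorem lmsss_iff_code (F : Type) [Field F] [Fintype F]
    (k ℓ t b : ℕ) (hk : 0 < k) (hℓ : 0 < ℓ) (ht : 0 < t) (hb : 0 < b) (hlt : ℓ < b * k) :
    IsLMSSS F k ℓ t b ↔ IsGoodCode F k b ℓ (t + 1) := by
  calc IsLMSSS F k ℓ t b
    _ ↔ ∃ R : (Fin k → Fin b → F) →ₗ[F] (Fin ℓ → F), IsPrivateReconstruction t R :=
      isLMSSS_iff_exists_isPrivateReconstruction
    _ ↔ ∃ g : Module.Dual F (Fin ℓ → F) →ₗ[F] (Fin k → Module.Dual F (Fin b → F)),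
          DetectsErrors t g :=
      exists_isPrivateReconstruction_iff_exists_detectsErrors t
    _ ↔ ∃ g : (Fin ℓ → F) →ₗ[F] (Fin k → Fin b → F), DetectsErrors t g :=
      exists_detectsErrors_congr t (dotProductEquiv F (Fin ℓ)).symm
        fun _ ↦ (dotProductEquiv F (Fin b)).symm
    _ ↔ IsGoodCode F k b ℓ (t + 1) := isGoodCode_iff_exists_detectsErrors.symm
end

section
/- Let t < k be positive integers and set ℓ = k − t. Let F be a finite field with |F| ≥ k, let E be a field extension of F of degree ℓ, let γ ∈ E be a primitive element (i.e., E = F(γ)), and let α_1, …, α_k be distinct elements of F. Then there exist λ_1, …, λ_k ∈ E and an F-linear map Rec : F^k → E such that for every polynomial f ∈ E[X] of degree at most t, Rec( (Tr_{E/F}(λ_j · f(α_j)))_{j=1}^k ) = f(γ). -/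
/-!
Let `L_j` be the Lagrange basis polynomials over `E` at the nodes `α_j`, and take `λ_j = L_j(γ)`.
For `g ∈ F[X]` with `deg f + deg g < k`, interpolating `f * g` at the nodes gives
`f(γ) g(γ) = ∑ j, λ_j f(α_j) g(α_j)`. As `g(α_j) ∈ F`, the trace turns this into
`Tr(f(γ) g(γ)) = ∑ j, g(α_j) Tr(λ_j f(α_j))`. The choices `g = X ^ i` with `i < ℓ` are allowed, so
the `k` field elements `Tr(λ_j f(α_j))` determine `F`-linearly all the traces `Tr(f(γ) γ ^ i)`.
These are the coordinates of `f(γ)` in the basis dual to the powers of `γ` under the trace form,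
which is nondegenerate because `E / F` is separable.
-/

open scoped BigOperators

open Polynomial Module

section Interpolation

variable {ι E : Type*} [DecidableEq ι] [Field E]

/-- The value at `x` of the `j`-th Lagrange basis polynomial for the nodes `v`: the coefficient of
the value at `v j` when a polynomial is evaluated at `x` by interpolation. At `x = γ` these are the
constants `λ_j` by which the servers multiply their shares. -/
noncomputable def lagrangeWeight (s : Finset ι) (v : ι → E) (x : E) (j : ι) : E :=
  (Lagrange.basis s v j).eval x

theorem eval_eq_sum_lagrangeWeight_mul_eval {s : Finset ι} {v : ι → E} (hv : Set.InjOn v s)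
    {f : E[X]} (hf : f.degree < s.card) (x : E) :
    f.eval x = ∑ j ∈ s, lagrangeWeight s v x j * f.eval (v j) := by
  conv_lhs => rw [Lagrange.eq_interpolate hv hf]
  simp only [Lagrange.interpolate_apply, eval_finsetSum, eval_mul, eval_C, mul_comm,
    lagrangeWeight]

theorem map_eval_mul_aeval_eq_sum {s : Finset ι} {F M : Type*} [CommSemiring F] [Algebra F E]
    [AddCommMonoid M] [Module F M] (φ : E →ₗ[F] M) {α : ι → F}
    (hα : Set.InjOn (algebraMap F E ∘ α) s) {f : E[X]} {g : F[X]}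
    (hfg : f.degree + g.degree < s.card) (x : E) :
    φ (f.eval x * aeval x g) = ∑ j ∈ s, g.eval (α j) •
      φ (lagrangeWeight s (algebraMap F E ∘ α) x j * f.eval (algebraMap F E (α j))) := by
  have hdeg : (f * g.map (algebraMap F E)).degree < s.card :=
    (degree_mul_le _ _).trans_lt ((add_le_add_right degree_map_le _).trans_lt hfg)
  rw [← eval_map_algebraMap, ← eval_mul, eval_eq_sum_lagrangeWeight_mul_eval hα hdeg, map_sum]
  refine Finset.sum_congr rfl fun j _ => ?_
  rw [← map_smul, Algebra.smul_def, eval_mul, Function.comp_apply, eval_map_apply]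
  ring_nf

end Interpolation

theorem exists_powerBasis_gen_eq_of_adjoin_eq_top {F E : Type*} [Field F] [Field E] [Algebra F E]
    {γ : E} (hint : IsIntegral F γ) (hγ : IntermediateField.adjoin F {γ} = ⊤) :
    ∃ pb : PowerBasis F E, pb.gen = γ :=
  ⟨(IntermediateField.adjoin.powerBasis hint).map
    ((IntermediateField.equivOfEq hγ).trans IntermediateField.topEquiv), by simp⟩

section TraceRecovery

variable {ι F E : Type*} [Field F] [Field E] [Algebra F E] [Algebra.IsSeparable F E]

theorem sum_trace_mul_smul_traceDual [FiniteDimensional F E] [Fintype ι] [DecidableEq ι]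
    (b : Basis ι F E) (x : E) :
    ∑ i, Algebra.trace F E (x * b i) • b.traceDual i = x := by
  simpa only [Basis.traceDual_repr_apply, Algebra.traceForm_apply] using b.traceDual.sum_repr x

/-- The coefficient, in the recovered element of `E`, of the output of a server with evaluation
point `a`: the vector with coordinates `1, a, a ^ 2, …` in the trace-dual of a power basis. -/
noncomputable def recoveryVector [FiniteDimensional F E] (pb : PowerBasis F E) (a : F) : E :=
  ∑ i : Fin pb.dim, a ^ (i : ℕ) • pb.basis.traceDual i

theorem sum_trace_smul_recoveryVector [FiniteDimensional F E] [DecidableEq ι] {s : Finset ι}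
    {α : ι → F} (hα : Set.InjOn α s) (pb : PowerBasis F E) {t : ℕ} (ht : t + pb.dim ≤ s.card)
    {f : E[X]} (hf : f.degree ≤ t) :
    ∑ j ∈ s, Algebra.trace F E (lagrangeWeight s (algebraMap F E ∘ α) pb.gen j *
      f.eval (algebraMap F E (α j))) • recoveryVector pb (α j) = f.eval pb.gen := by
  set c : ι → F := fun j => Algebra.trace F E
    (lagrangeWeight s (algebraMap F E ∘ α) pb.gen j * f.eval (algebraMap F E (α j)))
  have hdeg (i : Fin pb.dim) : f.degree + (X ^ (i : ℕ) : F[X]).degree < s.card := by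
    rw [degree_X_pow]
    exact (add_le_add_left hf _).trans_lt (by norm_cast; omega)
  have hcoord (i : Fin pb.dim) :
      Algebra.trace F E (f.eval pb.gen * pb.basis i) = ∑ j ∈ s, α j ^ (i : ℕ) * c j := by
    simpa only [map_pow, aeval_X, eval_pow, eval_X, pb.basis_eq_pow, smul_eq_mul] using
      map_eval_mul_aeval_eq_sum (Algebra.trace F E) ((algebraMap F E).injective.comp_injOn hα)
        (hdeg i) pb.gen
  calc ∑ j ∈ s, c j • recoveryVector pb (α j)
      = ∑ j ∈ s, ∑ i : Fin pb.dim, (α j ^ (i : ℕ) * c j) • pb.basis.traceDual i := by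
        simp only [recoveryVector, Finset.smul_sum, smul_smul, mul_comm]
    _ = ∑ i : Fin pb.dim, (∑ j ∈ s, α j ^ (i : ℕ) * c j) • pb.basis.traceDual i := by
        rw [Finset.sum_comm]
        simp only [Finset.sum_smul]
    _ = ∑ i, Algebra.trace F E (f.eval pb.gen * pb.basis i) • pb.basis.traceDual i := by
        simp only [hcoord]
    _ = f.eval pb.gen := sum_trace_mul_smul_traceDual pb.basis _

theorem shamir_concat_trace_recovery_general [Fintype ι] {t : ℕ}
    (ht : t + finrank F E ≤ Fintype.card ι) {γ : E}
    (hγ : IntermediateField.adjoin F {γ} = ⊤) {α : ι → F} (hα : Function.Injective α) :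
    ∃ (lam : ι → E) (Rec : (ι → F) →ₗ[F] E), ∀ f : E[X], f.degree ≤ t →
      Rec (fun j => Algebra.trace F E (lam j * f.eval (algebraMap F E (α j)))) = f.eval γ := by
  classical
  obtain ⟨pb, rfl⟩ :=
    exists_powerBasis_gen_eq_of_adjoin_eq_top (Algebra.IsIntegral.isIntegral γ) hγ
  have : FiniteDimensional F E := pb.finite
  rw [pb.finrank] at ht
  exact ⟨lagrangeWeight Finset.univ (algebraMap F E ∘ α) pb.gen,
    Fintype.linearCombination F fun j => recoveryVector pb (α j),
    fun f hf => sum_trace_smul_recoveryVector hα.injOn pb ht hf⟩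

end TraceRecovery

/-- **HSS-for-concatenation from Shamir sharing (trace-based recovery).**
Let `t < k`, `ℓ = k − t`, let `F` be a finite field with `|F| ≥ k`, let `E/F` be a field
extension of degree `ℓ` with primitive element `γ` (i.e. `E = F(γ)`), and let
`α_1, …, α_k ∈ F` be distinct.  Then there are `λ_1, …, λ_k ∈ E` and an `F`-linear map
`Rec : F^k → E` such that for every polynomial `f ∈ E[X]` of degree at most `t`,
`Rec ((Tr_{E/F} (λ_j · f(α_j)))_j) = f(γ)`. -/
theorem shamir_concat_trace_recovery (F E : Type) [Field F] [Fintype F] [Field E]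
    [Algebra F E] (t k : ℕ) (ht : 0 < t) (htk : t < k) (hFcard : k ≤ Fintype.card F)
    (hdeg : Module.finrank F E = k - t)
    (γ : E) (hγ : IntermediateField.adjoin F {γ} = ⊤)
    (α : Fin k → F) (hα : Function.Injective α) :
    ∃ (lam : Fin k → E) (Rec : (Fin k → F) →ₗ[F] E),
      ∀ f : Polynomial E, f.degree ≤ (t : ℕ) →
        Rec (fun j => Algebra.trace F E (lam j * Polynomial.eval (algebraMap F E (α j)) f))
          = Polynomial.eval γ f := by
  have : FiniteDimensional F E := .of_finrank_pos (by omega)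
  exact shamir_concat_trace_recovery_general (by rw [hdeg, Fintype.card_fin]; omega) hγ hα
end

section
/- Let d, t, m be positive integers, let k > dt, let F be a finite field with |F| ≥ k, and set ℓ = k − dt. Let E be a field extension of F of degree ℓ with primitive element γ (E = F(γ)), and let α_1, …, α_k be distinct elements of F with γ ∉ {α_1,…,α_k}. Consider the Shamir sharing over E of a secret x ∈ F: a uniformly random polynomial p ∈ E[X] with deg(p) ≤ t and p(γ) = x is chosen, and server j receives p(α_j) ∈ E. Then: (a) this sharing is t-private, i.e., for every T ⊆ [k] with |T| ≤ t, the joint distribution of (p(α_j))_{j∈T} is the same for all secrets x ∈ F; and (b) there exist evaluation functions Eval_j — each mapping a tuple (f_1,…,f_ℓ) ∈ POLY_{d,m}(F)^ℓ together with server j's Shamir shares of the ℓm inputs to a single element of F — and an F-linear map Rec : F^k → F^ℓ such that for all f_1,…,f_ℓ ∈ POLY_{d,m}(F), all inputs x_{i,r} ∈ F (i ∈ [m], r ∈ [ℓ]), and all polynomials p_{i,r} ∈ E[X] of degree at most t with p_{i,r}(γ) = x_{i,r}, Rec( (Eval_j((f_r)_r, (p_{i,r}(α_j))_{i,r}))_{j=1}^k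 ) = (f_r(x_{1,r},…,x_{m,r}))_{r=1}^ℓ. In particular the download cost is k·log₂|F| bits and the download rate is 1 − dt/k. -/
/-!
**Privacy.** Let `a` be the at most `t` evaluation points of a coalition. The multiple of
`∏ j, (X - a j)` with value `x' - x` at `γ` has degree at most `t` and vanishes at every `a j`, so
adding it is a bijection from the sharings of `x` to the sharings of `x'` with the same shares.

**Evaluation.** Any nonzero `F`-linear functional `φ : E → F` makes `(w, z) ↦ φ (w * z)` a
nondegenerate pairing, so the linearly independent elements `1, γ, …, γ^(ℓ-1)` admit a dual family
`b` with `φ (γ^s * b r) = δ_{sr}`. The polynomial `G = ∑ r, b r • f_r(p_{1,r}, …, p_{m,r})` has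
degree at most `d * t` and satisfies `φ (γ^s * G(γ)) = f_s(x_{1,s}, …, x_{m,s})`. For `s < ℓ` the
degree of `X^s * G` is less than the number of servers, so Lagrange interpolation with basis `L_j`
at the `α_j` gives `φ (γ^s * G(γ)) = ∑ j, φ (α_j^s * L_j(γ) * G(α_j))`. As `α_j^s` lies in `F`, it
leaves the functional: server `j` can send the single element `φ (L_j(γ) * G(α_j))` of `F`, and the
transposed Vandermonde matrix recovers every output from these.
-/

open scoped BigOperators

namespace ShamirHSS

open Polynomial

section Privacy

variable {R E κ : Type*} [CommRing R] [Field E] {t : ℕ}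

/-- The Shamir sharings of the secret `x`, placed at `γ`, in which the parties with evaluation
points `a` receive the shares `v`; only the parties of a coalition are indexed by `κ`. -/
def sharings (t : ℕ) (γ x : R) (a v : κ → R) : Set R[X] :=
  {p | p.degree ≤ t ∧ eval γ p = x ∧ (fun j => eval (a j) p) = v}

theorem add_mem_sharings_iff {γ x y : R} {a v : κ → R} {p r : R[X]}
    (hr : r ∈ sharings t γ y a 0) :
    p + r ∈ sharings t γ (x + y) a v ↔ p ∈ sharings t γ x a v := by
  obtain ⟨hr_degree, hrγ, hra⟩ := hr
  have degree_iff : (p + r).degree ≤ t ↔ p.degree ≤ t := by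
    simpa only [mem_degreeLE] using
      (degreeLE R (t : WithBot ℕ)).add_mem_iff_left (mem_degreeLE.2 hr_degree)
  have shares_eq : (fun j => eval (a j) (p + r)) = fun j => eval (a j) p := by
    funext j
    rw [eval_add, show eval (a j) r = 0 from congrFun hra j, add_zero]
  have secret_iff : eval γ (p + r) = x + y ↔ eval γ p = x := by
    rw [eval_add, hrγ, add_left_inj]
  exact and_congr degree_iff (and_congr secret_iff (by rw [shares_eq]))

theorem sharings_zero_nonempty [Fintype κ] (hκ : Fintype.card κ ≤ t) {γ : E} {a : κ → E}
    (hγ : ∀ j, γ ≠ a j) (y : E) : (sharings t γ y a 0).Nonempty := by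
  set q := Lagrange.nodal Finset.univ a
  have hq_degree : q.degree ≤ t := by simpa [q] using hκ
  have hqγ : eval γ q ≠ 0 := Lagrange.eval_nodal_not_at_node fun j _ => hγ j
  have hqa (j : κ) : eval (a j) q = 0 := Lagrange.eval_nodal_at_node (Finset.mem_univ j)
  refine ⟨(y / eval γ q) • q, (degree_smul_le _ q).trans hq_degree, ?_, ?_⟩
  · rw [eval_smul, smul_eq_mul, div_mul_cancel₀ y hqγ]
  · funext j
    simp [hqa]

theorem nonempty_sharings_equiv [Fintype κ] (hκ : Fintype.card κ ≤ t) {γ : E} {a : κ → E}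
    (hγ : ∀ j, γ ≠ a j) (x x' : E) (v : κ → E) :
    Nonempty (sharings t γ x a v ≃ sharings t γ x' a v) := by
  obtain ⟨r, hr⟩ := sharings_zero_nonempty hκ hγ (x' - x)
  refine ⟨(Equiv.addRight r).subtypeEquiv fun p => ?_⟩
  have h := add_mem_sharings_iff (p := p) (x := x) (v := v) hr
  rw [add_sub_cancel] at h
  exact h.symm

end Privacy

section DualFamily

variable {F E : Type*} [Field F] [Field E] [Algebra F E]

theorem exists_dual_family_of_linearIndependent {ι : Type*} [Finite ι] [DecidableEq ι]
    {φ : E →ₗ[F] F} (hφ : φ ≠ 0) {w : ι → E} (hw : LinearIndependent F w) :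
    ∃ b : ι → E, ∀ s r, φ (w s * b r) = if s = r then 1 else 0 := by
  let pairing : E →ₗ[F] E →ₗ[F] F := (LinearMap.mul F E).compr₂ φ
  obtain ⟨z, hz⟩ : ∃ z, φ z ≠ 0 := DFunLike.ne_iff.1 hφ
  have pairing_ker : LinearMap.ker pairing = ⊥ := by
    refine LinearMap.ker_eq_bot'.2 fun u hu => ?_
    by_contra hu0
    apply hz
    simpa [pairing, mul_inv_cancel_left₀ hu0] using LinearMap.congr_fun hu (u⁻¹ * z)
  have pairing_linearIndependent : LinearIndependent F fun s => (pairing (w s) : E → F) :=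
    (hw.map' pairing pairing_ker).map' (LinearMap.ltoFun F E F F)
      (LinearMap.ker_eq_bot.2 DFunLike.coe_injective)
  have pairing_surjective : Function.Surjective (LinearMap.pi fun s => pairing (w s)) := by
    rw [← LinearMap.range_eq_top, ← top_le_iff,
      ← span_flip_eq_top_iff_linearIndependent.2 pairing_linearIndependent, Submodule.span_le]
    rintro _ ⟨u, rfl⟩
    exact ⟨u, rfl⟩
  choose b hb using fun r => pairing_surjective fun s => if s = r then 1 else 0
  exact ⟨b, fun s r => congrFun (hb r) s⟩

theorem linearIndependent_pow_of_adjoin_eq_top {n : ℕ} (hn : Module.finrank F E = n) {γ : E}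
    (hγ : IntermediateField.adjoin F {γ} = ⊤) :
    LinearIndependent F fun s : Fin n => γ ^ (s : ℕ) := by
  obtain rfl | hn_pos := n.eq_zero_or_pos
  · exact linearIndependent_empty_type
  · have : FiniteDimensional F E := .of_finrank_pos (hn ▸ hn_pos)
    rw [← hn, ← (Field.primitive_element_iff_minpoly_natDegree_eq F γ).1 hγ]
    exact linearIndependent_pow γ

end DualFamily

section Interpolation

variable {F E ι : Type*} [Field F] [Field E] [Algebra F E] [DecidableEq ι]

theorem eval_eq_sum_eval_basis {s : Finset ι} {a : ι → E} (ha : Set.InjOn a s) {P : E[X]}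
    (hP : P.degree < s.card) (z : E) :
    eval z P = ∑ j ∈ s, eval (a j) P * eval z (Lagrange.basis s a j) := by
  conv_lhs => rw [Lagrange.eq_interpolate ha hP, Lagrange.interpolate_apply]
  simp only [eval_finsetSum, eval_mul, eval_C]

theorem map_aeval_mul_eval_eq_sum {s : Finset ι} {α : ι → F} (hα : Set.InjOn α s) (φ : E →ₗ[F] F)
    (γ : E) {Q : F[X]} {G : E[X]} (hQG : Q.natDegree + G.natDegree < s.card) :
    φ (aeval γ Q * eval γ G) = ∑ j ∈ s, eval (α j) Q *
      φ (eval γ (Lagrange.basis s (fun i => algebraMap F E (α i)) j) *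
        eval (algebraMap F E (α j)) G) := by
  have hnodes : Set.InjOn (fun i => algebraMap F E (α i)) s :=
    (algebraMap F E).injective.comp_injOn hα
  have hdegree : (Q.map (algebraMap F E) * G).degree < s.card := by
    refine degree_le_natDegree.trans_lt (Nat.cast_lt.2 (natDegree_mul_le.trans_lt ?_))
    rwa [natDegree_map]
  have h := eval_eq_sum_eval_basis hnodes hdegree γ
  simp only [eval_mul, eval_map_algebraMap, aeval_algebraMap_apply, coe_aeval_eq_eval] at h
  rw [h, map_sum]
  refine Finset.sum_congr rfl fun j _ => ?_
  rw [← smul_eq_mul (eval (α j) Q), ← map_smul, Algebra.smul_def]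
  exact congrArg φ (by ring)

end Interpolation

section PackedEvaluation

variable {F E A B σ ρ : Type*} [CommSemiring F] [CommSemiring E] [Algebra F E]
  [CommSemiring A] [Algebra F A] [Algebra E A] [CommSemiring B] [Algebra F B] [Algebra E B]
  [Fintype ρ]

/-- The weighted sum `∑ r, b r • f_r(y_{1,r}, …, y_{m,r})`. The values `y` are taken in an
`E`-algebra, so that the same notion covers the computation of a server on its shares (`A = E`) and
the polynomial that interpolates these computations (`A = E[X]`). -/
noncomputable def packedEval (b : ρ → E) (f : ρ → MvPolynomial σ F) (y : σ → ρ → A) : A :=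
  ∑ r, b r • MvPolynomial.aeval (fun i => y i r) (f r)

theorem map_packedEval [IsScalarTower F E A] [IsScalarTower F E B] (g : A →ₐ[E] B) (b : ρ → E)
    (f : ρ → MvPolynomial σ F) (y : σ → ρ → A) :
    g (packedEval b f y) = packedEval b f fun i r => g (y i r) := by
  simp only [packedEval, map_sum, map_smul]
  exact Finset.sum_congr rfl fun r _ => congrArg (b r • ·)
    (MvPolynomial.comp_aeval_apply _ (g.restrictScalars F) (f r))

theorem natDegree_mvPolynomial_aeval_le {d t : ℕ} {f : MvPolynomial σ F} (hf : f.totalDegree ≤ d)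
    {p : σ → E[X]} (hp : ∀ i, (p i).natDegree ≤ t) :
    (MvPolynomial.aeval p f).natDegree ≤ d * t := by
  have h := MvPolynomial.aeval_natDegree_le (MvPolynomial.map (algebraMap F E) f)
    ((Finset.sup_mono (MvPolynomial.support_map_subset _ f)).trans hf) p hp
  rwa [MvPolynomial.aeval_map_algebraMap] at h

theorem natDegree_packedEval_le {d t : ℕ} (b : ρ → E) {f : ρ → MvPolynomial σ F}
    (hf : ∀ r, (f r).totalDegree ≤ d) {p : σ → ρ → E[X]} (hp : ∀ i r, (p i r).natDegree ≤ t) :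
    (packedEval b f p).natDegree ≤ d * t :=
  natDegree_sum_le_of_forall_le _ _ fun r _ =>
    (natDegree_smul_le _ _).trans (natDegree_mvPolynomial_aeval_le (hf r) fun i => hp i r)

theorem packedEval_algebraMap (b : ρ → E) (f : ρ → MvPolynomial σ F) (x : σ → ρ → F) :
    packedEval b f (fun i r => algebraMap F E (x i r)) =
      ∑ r, MvPolynomial.eval (fun i => x i r) (f r) • b r := by
  refine Finset.sum_congr rfl fun r _ => ?_
  have h : MvPolynomial.aeval (fun i => algebraMap F E (x i r)) (f r) =
      algebraMap F E (MvPolynomial.eval (fun i => x i r) (f r)) :=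
    MvPolynomial.aeval_algebraMap_apply E (fun i => x i r) (f r)
  rw [h, smul_eq_mul, mul_comm, ← Algebra.smul_def]

theorem map_mul_packedEval_algebraMap [DecidableEq ρ] {φ : E →ₗ[F] F} {w b : ρ → E}
    (hb : ∀ s r, φ (w s * b r) = if s = r then 1 else 0) (f : ρ → MvPolynomial σ F)
    (x : σ → ρ → F) (s : ρ) :
    φ (w s * packedEval b f fun i r => algebraMap F E (x i r)) =
      MvPolynomial.eval (fun i => x i s) (f s) := by
  simp [packedEval_algebraMap, Finset.mul_sum, hb]

end PackedEvaluation

section Reconstruction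

variable {F E ι σ ρ : Type*} [Field F] [Field E] [Algebra F E] [Fintype ι] [DecidableEq ι]
  [Fintype ρ]

/-- The answer of server `j` on the shares `y`: the image under `φ` of its contribution to the
Lagrange interpolation at `γ`. -/
noncomputable def serverAnswer (φ : E →ₗ[F] F) (b : ρ → E) (γ : E) (α : ι → F) (j : ι)
    (f : ρ → MvPolynomial σ F) (y : σ → ρ → E) : F :=
  φ (eval γ (Lagrange.basis Finset.univ (fun i => algebraMap F E (α i)) j) * packedEval b f y)

theorem sum_pow_mul_serverAnswer {d t s : ℕ} (hs : d * t + s < Fintype.card ι) (φ : E →ₗ[F] F)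
    (b : ρ → E) (γ : E) {α : ι → F} (hα : Function.Injective α) {f : ρ → MvPolynomial σ F}
    (hf : ∀ r, (f r).totalDegree ≤ d) {p : σ → ρ → E[X]} (hp : ∀ i r, (p i r).natDegree ≤ t) :
    ∑ j, α j ^ s * serverAnswer φ b γ α j f (fun i r => eval (algebraMap F E (α j)) (p i r)) =
      φ (γ ^ s * packedEval b f fun i r => eval γ (p i r)) := by
  have eval_packedEval (z : E) :
      eval z (packedEval b f p) = packedEval b f fun i r => eval z (p i r) := by
    simpa only [coe_aeval_eq_eval] using map_packedEval (aeval z) b f p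
  have hdegree : (X ^ s : F[X]).natDegree + (packedEval b f p).natDegree <
      (Finset.univ : Finset ι).card := by
    have := natDegree_packedEval_le b hf hp
    rw [natDegree_X_pow, Finset.card_univ]
    omega
  have h := map_aeval_mul_eval_eq_sum hα.injOn φ γ hdegree
  simp only [map_pow, aeval_X, eval_pow, eval_X, eval_packedEval] at h
  exact h.symm

end Reconstruction

end ShamirHSS

open ShamirHSS in
theorem shamir_hss_for_polynomials_general {F E ι σ : Type*} [Field F] [Field E] [Algebra F E]
    [Fintype ι] {d t ℓ : ℕ} (hℓ : d * t + ℓ ≤ Fintype.card ι) {γ : E}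
    (hγ : LinearIndependent F fun s : Fin ℓ => γ ^ (s : ℕ)) {α : ι → F}
    (hα : Function.Injective α) (hγα : ∀ j, γ ≠ algebraMap F E (α j)) :
    -- a bijection rather than an equality of `Nat.card`, as `F` and `E` may be infinite
    (∀ T : Finset ι, T.card ≤ t → ∀ x x' : E, ∀ v : T → E,
      Nonempty (sharings t γ x (fun j : T => algebraMap F E (α j)) v ≃
        sharings t γ x' (fun j : T => algebraMap F E (α j)) v)) ∧
    ∃ (Eval : ι → (Fin ℓ → {f : MvPolynomial σ F // f.totalDegree ≤ d}) → (σ → Fin ℓ → E) → F)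
      (Rec : (ι → F) →ₗ[F] (Fin ℓ → F)),
      ∀ (f : Fin ℓ → {f : MvPolynomial σ F // f.totalDegree ≤ d}) (x : σ → Fin ℓ → F)
        (p : σ → Fin ℓ → Polynomial E),
        (∀ i r, (p i r).degree ≤ t) →
        (∀ i r, Polynomial.eval γ (p i r) = algebraMap F E (x i r)) →
        Rec (fun j => Eval j f (fun i r => Polynomial.eval (algebraMap F E (α j)) (p i r)))
          = fun r => MvPolynomial.eval (fun i => x i r) (f r).1 := by
  classical
  refine ⟨fun T hT => nonempty_sharings_equiv (by rwa [Fintype.card_coe]) fun j => hγα j, ?_⟩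
  obtain ⟨φ, hφ⟩ := exists_ne (0 : Module.Dual F E)
  obtain ⟨b, hb⟩ := exists_dual_family_of_linearIndependent hφ hγ
  refine ⟨fun j f => serverAnswer φ b γ α j fun r => (f r).1,
    (Matrix.rectVandermonde α 1 ℓ).vecMulLinear, fun f x p hp hx => funext fun s => ?_⟩
  have hsum := sum_pow_mul_serverAnswer (s := s) (by omega) φ b γ hα (fun r => (f r).2)
    fun i r => Polynomial.natDegree_le_of_degree_le (hp i r)
  simp only [hx, map_mul_packedEval_algebraMap hb] at hsum
  simpa [Matrix.vecMul_apply_eq_sum, Matrix.rectVandermonde_apply, mul_comm] using hsum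

/-- **Linear HSS for low-degree polynomials from Shamir sharing.**
Let `d, t, m` be positive, `k > dt`, `F` a finite field with `|F| ≥ k`, `ℓ = k − dt`,
`E/F` an extension of degree `ℓ` with primitive element `γ` (`E = F(γ)`), and
`α_1, …, α_k ∈ F` distinct with `γ ∉ {α_1, …, α_k}`.  Shamir sharing of `x ∈ F` picks a
uniformly random `p ∈ E[X]` with `deg p ≤ t` and `p(γ) = x`, and gives server `j` the
share `p(α_j)`.  Then (a) this sharing is `t`-private, and (b) there are evaluation
functions `Eval_j` producing a single element of `F` each, and a single `F`-linear
reconstruction map `Rec : F^k → F^ℓ`, that correctly evaluate any tuple of `ℓ` polynomials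
of `POLY_{d,m}(F)` on any inputs, for every valid choice of the sharing polynomials;
in particular the download cost is `k·log₂|F|` bits and the download rate is `1 − dt/k`. -/
theorem shamir_hss_for_polynomials (F E : Type) [Field F] [Fintype F] [Field E]
    [Algebra F E] (d t m k : ℕ) (hd : 0 < d) (ht : 0 < t) (hm : 0 < m)
    (hdtk : d * t < k) (hFcard : k ≤ Fintype.card F)
    (hdeg : Module.finrank F E = k - d * t)
    (γ : E) (hγ : IntermediateField.adjoin F {γ} = ⊤)
    (α : Fin k → F) (hα : Function.Injective α)
    (hγα : ∀ j : Fin k, γ ≠ algebraMap F E (α j)) :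
    -- (a) `t`-privacy of the Shamir sharing, with the secret placed at `γ`
    (∀ T : Finset (Fin k), T.card ≤ t → ∀ x x' : F, ∀ v : ↥T → E,
      Nat.card {p : Polynomial E //
          p.degree ≤ (t : ℕ) ∧ Polynomial.eval γ p = algebraMap F E x ∧
          (fun j : ↥T => Polynomial.eval (algebraMap F E (α j.1)) p) = v} =
        Nat.card {p : Polynomial E //
          p.degree ≤ (t : ℕ) ∧ Polynomial.eval γ p = algebraMap F E x' ∧
          (fun j : ↥T => Polynomial.eval (algebraMap F E (α j.1)) p) = v}) ∧
    -- (b) homomorphic evaluation with one element of `F` downloaded per server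
    ∃ (Eval : ∀ _ : Fin k,
        (Fin (k - d * t) → {f : MvPolynomial (Fin m) F // f.totalDegree ≤ d}) →
        (Fin m → Fin (k - d * t) → E) → F)
      (Rec : (Fin k → F) →ₗ[F] (Fin (k - d * t) → F)),
      ∀ (f : Fin (k - d * t) → {f : MvPolynomial (Fin m) F // f.totalDegree ≤ d})
        (x : Fin m → Fin (k - d * t) → F)
        (p : Fin m → Fin (k - d * t) → Polynomial E),
        (∀ i r, (p i r).degree ≤ (t : ℕ)) →
        (∀ i r, Polynomial.eval γ (p i r) = algebraMap F E (x i r)) →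
        Rec (fun j => Eval j f (fun i r => Polynomial.eval (algebraMap F E (α j)) (p i r)))
          = fun r => MvPolynomial.eval (fun i => x i r) (f r).1 := by
  have h := shamir_hss_for_polynomials_general (σ := Fin m) (d := d) (t := t)
    (by rw [Nat.add_sub_cancel' hdtk.le, Fintype.card_fin])
    (ShamirHSS.linearIndependent_pow_of_adjoin_eq_top hdeg hγ) hα hγα
  exact ⟨fun T hT x x' v => Nat.card_congr (h.1 T hT _ _ v).some, h.2⟩
end

section
/- For all positive integers d, t, k, w with dt + 1 ≤ k, there is a t-private k-server PIR protocol for databases of N records, each record a string of w·(k−dt)·⌈log₂k⌉ bits, with download cost w·k·⌈log₂k⌉ bits (hence download rate 1 − dt/k) and upload cost at most k·m·(k−dt)²·⌈log₂k⌉ bits, where m is the smallest positive integer with N ≤ binom(m,d) (so the upload cost is O(k³·log k·N^{1/d}) bits). -/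
open scoped BigOperators

/-!
Let `s = k - d t`, `q = 2 ^ ⌈log₂ k⌉ ≥ k`, and let `F ⊆ E` be finite fields with `|F| = q` and
`[E : F] = s`. A record is a vector in `E ^ w`, and the records are indexed by distinct `d`-subsets
`S i` of `m` variables, so that record `i` is the value of the form `∑ i, D i ∏ x ∈ S i, y x` at
the indicator vector `z` of `S i`.

The client hides `z` in a random curve over `E` of degree at most `t` whose value at a fixed point
`p` of the projective line is `z`, and sends the values of the curve at `k` distinct points of `F`
to the servers. By Lagrange interpolation the values at any `t` of these points are independent of
`z`. The composition `G` of the form with the curve has degree at most `d t`, and the requested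
record is the value of `G` at `p`.

If `s > 1`, then `p` is a generator `α` of `E` over `F`. Server `j` multiplies `G(λ_j)` by
`c(λ_j)`, where `c = M / (X - α)` and `M` is the minimal polynomial of `α`, and applies a fixed
nonzero `F`-linear functional `φ : E → F`. Since `λ_j ∈ F`, the answers are the values of the
polynomial `φ(c G) ∈ F[X]` obtained coefficientwise, which has degree at most `d t + s - 1 < k` and
is thus determined by them. Writing `G = G(α) + (X - α) G₁` gives `φ(c G) = φ(G(α) c) + M φ(G₁)`,
where the first summand has degree less than `deg M`; so `φ(c G)` determines `φ(G(α) c)`, and with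
it `G(α)`, because the coefficients of `c` span `E` over `F`.

If `s = 1`, all elements of `F` may be taken by the servers, and `p` is the point at infinity.
-/

namespace HighRatePIR

open Polynomial IntermediateField Module
open scoped OnePoint

/-! ### Functionals applied coefficientwise -/

section CoeffMap

variable {R A : Type*} [CommSemiring R] [Semiring A] [Algebra R A]

/-- The `R`-linear map `A[X] → R[X]` applying the functional `φ` to every coefficient. -/
noncomputable def coeffMap (φ : Dual R A) : A[X] →ₗ[R] R[X] :=
  lsum fun n => monomial n ∘ₗ φ

@[simp]
lemma coeffMap_monomial (φ : Dual R A) (n : ℕ) (a : A) :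
    coeffMap φ (monomial n a) = monomial n (φ a) := by
  simp [coeffMap, sum_monomial_index]

@[simp]
lemma coeff_coeffMap (φ : Dual R A) (p : A[X]) (n : ℕ) :
    (coeffMap φ p).coeff n = φ (p.coeff n) := by
  induction p using Polynomial.induction_on' with
  | add p q hp hq => simp [hp, hq]
  | monomial i a => simp [coeff_monomial, apply_ite φ]

lemma natDegree_coeffMap_le (φ : Dual R A) (p : A[X]) :
    (coeffMap φ p).natDegree ≤ p.natDegree :=
  natDegree_le_iff_coeff_eq_zero.2 fun n hn => by
    rw [coeff_coeffMap, coeff_eq_zero_of_natDegree_lt hn, map_zero]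

lemma eval_coeffMap (φ : Dual R A) (p : A[X]) (x : R) :
    (coeffMap φ p).eval x = φ (p.eval (algebraMap R A x)) := by
  induction p using Polynomial.induction_on' with
  | add p q hp hq => simp [hp, hq]
  | monomial n a =>
    rw [coeffMap_monomial, eval_monomial, eval_monomial, ← map_pow, ← Algebra.commutes,
      ← Algebra.smul_def, map_smul, smul_eq_mul, mul_comm]

lemma coeffMap_map_mul (φ : Dual R A) (q : R[X]) (p : A[X]) :
    coeffMap φ (q.map (algebraMap R A) * p) = q * coeffMap φ p := by
  ext n
  simp [coeff_mul, ← Algebra.smul_def]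

end CoeffMap

section MinpolyDiv

variable {F E : Type*} [Field F] [Field E] [Algebra F E] {α : E} {φ : Dual F E}

lemma span_coeff_minpolyDiv_eq_top (hα : IsIntegral F α) (htop : F⟮α⟯ = ⊤) :
    Submodule.span F (Set.range (minpolyDiv F α).coeff) = ⊤ := by
  rw [span_coeff_minpolyDiv hα, (adjoin_simple_eq_top_iff_of_isAlgebraic hα.isAlgebraic).1 htop,
    Algebra.top_toSubmodule]

lemma eq_zero_of_coeffMap_C_mul_minpolyDiv_eq_zero (hα : IsIntegral F α) (htop : F⟮α⟯ = ⊤)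
    (hφ : φ ≠ 0) {e : E} (h : coeffMap φ (C e * minpolyDiv F α) = 0) : e = 0 := by
  have hmul : φ ∘ₗ LinearMap.mulLeft F e = 0 := by
    refine LinearMap.ext_on (span_coeff_minpolyDiv_eq_top hα htop) ?_
    rintro _ ⟨n, rfl⟩
    simpa using congrArg (coeff · n) h
  by_contra he
  refine hφ (LinearMap.ext fun x => ?_)
  simpa [he] using LinearMap.congr_fun hmul (e⁻¹ * x)

lemma eval_eq_zero_of_coeffMap_minpolyDiv_mul_eq_zero (hα : IsIntegral F α) (htop : F⟮α⟯ = ⊤)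
    (hφ : φ ≠ 0) {G : E[X]} (h : coeffMap φ (minpolyDiv F α * G) = 0) : G.eval α = 0 := by
  set c := minpolyDiv F α with hc
  obtain ⟨G₁, hG₁⟩ : X - C α ∣ G - C (G.eval α) := X_sub_C_dvd_sub_C_eval
  have hsplit : c * G = C (G.eval α) * c + (minpoly F α).map (algebraMap F E) * G₁ := by
    rw [← minpolyDiv_spec F α, ← hc]
    linear_combination c * hG₁
  rw [hsplit, map_add, coeffMap_map_mul] at h
  have hdvd : minpoly F α ∣ coeffMap φ (C (G.eval α) * c) :=
    ⟨-coeffMap φ G₁, by linear_combination h⟩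
  have hdegree : (coeffMap φ (C (G.eval α) * c)).degree < (minpoly F α).degree :=
    degree_lt_degree <| ((natDegree_coeffMap_le _ _).trans (natDegree_C_mul_le _ _)).trans_lt
      (natDegree_minpolyDiv_lt hα)
  exact eq_zero_of_coeffMap_C_mul_minpolyDiv_eq_zero hα htop hφ
    (eq_zero_of_dvd_of_degree_lt hdvd hdegree)

lemma eval_eq_zero_of_dual_minpolyDiv_mul_eval_eq_zero {κ : Type*} [Fintype κ]
    (hα : IsIntegral F α) (htop : F⟮α⟯ = ⊤) (hφ : φ ≠ 0) {pt : κ → F} (hpt : pt.Injective)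
    {G : E[X]} (hG : G.natDegree + (minpoly F α).natDegree ≤ Fintype.card κ)
    (h : ∀ j, φ ((minpolyDiv F α * G).eval (algebraMap F E (pt j))) = 0) : G.eval α = 0 := by
  refine eval_eq_zero_of_coeffMap_minpolyDiv_mul_eq_zero hα htop hφ <|
    eq_zero_of_natDegree_lt_card_of_eval_eq_zero _ hpt (fun j => ?_) ?_
  · rw [eval_coeffMap, h]
  · have hmul : (minpolyDiv F α * G).natDegree ≤ _ := natDegree_mul_le
    have hdiv := natDegree_minpolyDiv_lt hα
    have hcoeff := natDegree_coeffMap_le φ (minpolyDiv F α * G)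
    omega

end MinpolyDiv

/-! ### Curves through a prescribed point -/

section EvalForm

variable {E : Type*} [CommSemiring E]

/-- Evaluation of a polynomial, regarded as a binary form of degree `n`, at a point of the
projective line `OnePoint E`: the value at infinity is the coefficient of degree `n`. -/
noncomputable def evalForm (n : ℕ) (p : OnePoint E) : E[X] →ₗ[E] E :=
  p.elim (lcoeff E n) leval

lemma evalForm_prod {ι : Type*} (p : OnePoint E) (s : Finset ι) (f : ι → E[X]) {t : ℕ}
    (hf : ∀ i ∈ s, (f i).natDegree ≤ t) :
    evalForm (s.card * t) p (∏ i ∈ s, f i) = ∏ i ∈ s, evalForm t p (f i) := by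
  cases p with
  | infty => exact coeff_prod_of_natDegree_le s f t hf
  | coe α => exact eval_prod s f α

end EvalForm

section HidingCurve

variable {E : Type*} [Field E] {t : ℕ}

/-- The polynomial curve of degree at most `t` whose value at the point `p` of the projective line
is the secret `z`, masked by the polynomial `r` of degree less than `t`. -/
noncomputable def hidingCurve (t : ℕ) (p : OnePoint E) (z : E) (r : E[X]) : E[X] :=
  p.elim (C z * X ^ t + r) fun α => C z + (X - C α) * r

lemma natDegree_hidingCurve_le (p : OnePoint E) (z : E) (r : degreeLT E t) :
    (hidingCurve t p z r).natDegree ≤ t := by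
  have hr := mem_degreeLT.1 r.2
  cases p with
  | infty =>
    exact natDegree_add_le_of_degree_le (natDegree_C_mul_X_pow_le z t)
      (natDegree_le_of_degree_le hr.le)
  | coe α =>
    refine natDegree_add_le_of_degree_le (by simp) ?_
    rcases eq_or_ne (r : E[X]) 0 with h0 | h0
    · simp [h0]
    · rw [natDegree_mul (X_sub_C_ne_zero α) h0, natDegree_X_sub_C, add_comm]
      exact (natDegree_lt_iff_degree_lt h0).2 hr

lemma evalForm_hidingCurve (p : OnePoint E) (z : E) (r : degreeLT E t) :
    evalForm t p (hidingCurve t p z r) = z := by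
  cases p with
  | infty =>
    simp [evalForm, hidingCurve, coeff_eq_zero_of_degree_lt (mem_degreeLT.1 r.2)]
  | coe α => simp [evalForm, hidingCurve]

lemma exists_eval_hidingCurve_eq (t : ℕ) {p : OnePoint E} {x : E} (hx : (x : OnePoint E) ≠ p) :
    ∃ u v : E, v ≠ 0 ∧ ∀ z r, (hidingCurve t p z r).eval x = z * u + v * r.eval x := by
  cases p with
  | infty => exact ⟨x ^ t, 1, one_ne_zero, by simp [hidingCurve]⟩
  | coe α =>
    exact ⟨1, x - α, sub_ne_zero.2 fun h => hx (congrArg _ h), by simp [hidingCurve]⟩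

lemma exists_eval_hidingCurve_add_eq {p : OnePoint E} {T : Finset E} (hT : T.card ≤ t)
    (hp : ∀ x ∈ T, (x : OnePoint E) ≠ p) (z z' : E) :
    ∃ δ : degreeLT E t, ∀ r : E[X], ∀ x ∈ T,
      (hidingCurve t p z' (r + δ)).eval x = (hidingCurve t p z r).eval x := by
  classical
  choose! u v hv heval using fun x hx => exists_eval_hidingCurve_eq t (hp x hx)
  let g : E[X] := Lagrange.interpolate T id fun x => (z - z') * u x / v x
  have hg : g.degree < t :=
    (Lagrange.degree_interpolate_lt _ Function.injective_id.injOn).trans_le (by exact_mod_cast hT)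
  refine ⟨⟨g, mem_degreeLT.2 hg⟩, fun r x hx => ?_⟩
  have hgx : g.eval x = (z - z') * u x / v x :=
    Lagrange.eval_interpolate_at_node _ Function.injective_id.injOn hx
  rw [heval x hx, heval x hx, eval_add, hgx]
  have hvx := hv x hx
  field_simp
  ring

end HidingCurve

/-! ### Private information retrieval over arbitrary alphabets -/

/-- A `t`-private information retrieval protocol with servers `κ`, record indices `I`, records `Y`,
client randomness uniform on the finite type `R`, queries `Q` and answers `A`. Privacy is expressed
by counting the outcomes of the randomness. -/
structure PIRProtocol (t : ℕ) (κ I Y R Q A : Type*) where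
  query : I → R → κ → Q
  answer : κ → (I → Y) → Q → A
  recon : I → R → (κ → A) → Y
  recon_answer : ∀ D i r, recon i r (fun j => answer j D (query i r j)) = D i
  card_query_eq : ∀ T : Finset κ, T.card ≤ t → ∀ (i i' : I) (v : T → Q),
    Nat.card {r : R // (fun j : T => query i r j) = v} =
      Nat.card {r : R // (fun j : T => query i' r j) = v}

namespace PIRProtocol

variable {t : ℕ} {κ I Y R Q A : Type*}

/-- The protocol with given queries and answers, where the answers determine the requested record
and any two requests are exchanged, for the servers in `T`, by a permutation of the randomness. -/
noncomputable def ofPerm [Nonempty Y] (query : I → R → κ → Q) (answer : κ → (I → Y) → Q → A)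
    (hanswer : ∀ i r,
      (fun D : I → Y => D i).FactorsThrough fun D j => answer j D (query i r j))
    (hquery : ∀ T : Finset κ, T.card ≤ t → ∀ i i' : I,
      ∃ e : Equiv.Perm R, ∀ r, ∀ j ∈ T, query i' (e r) j = query i r j) :
    PIRProtocol t κ I Y R Q A where
  query := query
  answer := answer
  recon i r := Function.extend (fun D j => answer j D (query i r j)) (fun D => D i)
    fun _ => Classical.arbitrary Y
  recon_answer D i r := (hanswer i r).extend_apply _ D
  card_query_eq T hT i i' v := by
    obtain ⟨e, he⟩ := hquery T hT i i'
    refine Nat.card_congr (e.subtypeEquiv fun r => ?_)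
    rw [funext fun j : T => he r j j.2]

/-- Transport of a protocol along encodings of records, randomness, queries and answers. -/
def congr {Y' R' Q' A' : Type*} (P : PIRProtocol t κ I Y R Q A) (eY : Y ≃ Y') (eR : R ≃ R')
    (eQ : Q ≃ Q') (eA : A ≃ A') : PIRProtocol t κ I Y' R' Q' A' where
  query i r j := eQ (P.query i (eR.symm r) j)
  answer j D q := eA (P.answer j (eY.symm ∘ D) (eQ.symm q))
  recon i r a := eY (P.recon i (eR.symm r) (eA.symm ∘ a))
  recon_answer D i r := by
    simp [Function.comp_def, P.recon_answer]
  card_query_eq T hT i i' v := by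
    have hcard (i : I) : Nat.card {r // (fun j : T => eQ (P.query i (eR.symm r) j)) = v} =
        Nat.card {r // (fun j : T => P.query i r j) = eQ.symm ∘ v} :=
      Nat.card_congr <| eR.symm.subtypeEquiv fun r => by
        simp only [funext_iff, Function.comp_apply, Equiv.eq_symm_apply]
    rw [hcard, hcard, P.card_query_eq T hT]

end PIRProtocol

/-! ### The protocol of a curve scheme -/

section DatabaseForm

variable {I σ E : Type*} [Fintype I] {d : ℕ}

/-- The form of degree `d` encoding the database `D`, with one monomial for each record, evaluated
at `y`. -/
def databaseForm {B : Type*} [CommSemiring B] [SMul E B] (S : I → Set.powersetCard σ d) (D : I → E)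
    (y : σ → B) : B :=
  ∑ i, D i • ∏ x ∈ (S i).1, y x

lemma databaseForm_sub [CommRing E] (S : I → Set.powersetCard σ d) (D D' : I → E) (y : σ → E) :
    databaseForm S (D - D') y = databaseForm S D y - databaseForm S D' y := by
  simp [databaseForm, sub_mul]

lemma databaseForm_indicator [CommSemiring E] {S : I → Set.powersetCard σ d} (hS : S.Injective)
    (D : I → E) (i : I) : databaseForm S D (Set.indicator (S i : Set σ) 1) = D i := by
  rw [databaseForm, Finset.sum_eq_single i]
  · rw [Finset.prod_congr rfl fun x hx => Set.indicator_of_mem (by exact hx) _]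
    simp
  · intro l _ hl
    -- Distinct `d`-sets are incomparable, so the monomial of `l` contains a zero variable.
    have hsub : ¬(S l).1 ⊆ (S i).1 := fun h =>
      hl <| hS <| Subtype.ext <| Finset.eq_of_subset_of_card_le h (by simp)
    obtain ⟨x, hxl, hxi⟩ := Finset.not_subset.1 hsub
    rw [Finset.prod_eq_zero hxl (Set.indicator_of_notMem (by exact hxi) _), smul_zero]
  · simp

variable [CommSemiring E] (S : I → Set.powersetCard σ d) (D : I → E)

lemma eval_databaseForm (f : σ → E[X]) (a : E) :
    (databaseForm S D f).eval a = databaseForm S D fun x => (f x).eval a := by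
  simp [databaseForm, eval_finsetSum, eval_prod]

variable {t : ℕ} {f : σ → E[X]}

lemma natDegree_databaseForm_le (hf : ∀ x, (f x).natDegree ≤ t) :
    (databaseForm S D f).natDegree ≤ d * t := by
  refine natDegree_sum_le_of_forall_le _ _ fun i _ => (natDegree_smul_le _ _).trans ?_
  calc (∏ x ∈ (S i).1, f x).natDegree
      ≤ ∑ x ∈ (S i).1, (f x).natDegree := natDegree_prod_le _ _
    _ ≤ (S i).1.card • t := Finset.sum_le_card_nsmul _ _ t fun x _ => hf x
    _ = d * t := by rw [Set.powersetCard.card_eq, smul_eq_mul]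

lemma evalForm_databaseForm (p : OnePoint E) (hf : ∀ x, (f x).natDegree ≤ t) :
    evalForm (d * t) p (databaseForm S D f) = databaseForm S D fun x => evalForm t p (f x) := by
  simp only [databaseForm, map_sum, map_smul]
  refine Finset.sum_congr rfl fun i _ => ?_
  rw [← evalForm_prod p _ _ fun x _ => hf x, Set.powersetCard.card_eq]

end DatabaseForm

/-- The data by which servers `κ` answer with symbols of `A` and jointly determine the value at
`secret` of a polynomial over `E` of degree at most `n`: server `j` evaluates the polynomial at
`pt j` and compresses the value with `proj j`. -/
structure CurveScheme (n : ℕ) (κ E A : Type*) [Field E] [AddCommGroup A] where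
  pt : κ → E
  secret : OnePoint E
  pt_ne_secret : ∀ j, (pt j : OnePoint E) ≠ secret
  proj : κ → E →+ A
  evalForm_eq_zero : ∀ G : E[X], G.natDegree ≤ n → (∀ j, proj j (G.eval (pt j)) = 0) →
    evalForm n secret G = 0

namespace CurveScheme

section Existence

variable {κ F : Type*} [Fintype κ] [Field F] {n : ℕ} {pt : κ → F}

/-- The scheme whose secret is placed at a generator `α` of a proper extension `E` of `F`, and hence
away from all points of the servers. -/
noncomputable def ofPrimitiveElement {E : Type*} [Field E] [Algebra F E] {α : E} {φ : Dual F E}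
    (hα : IsIntegral F α) (htop : F⟮α⟯ = ⊤) (hbot : α ∉ Set.range (algebraMap F E)) (hφ : φ ≠ 0)
    (hpt : pt.Injective) (hn : n + (minpoly F α).natDegree ≤ Fintype.card κ) :
    CurveScheme n κ E F where
  pt j := algebraMap F E (pt j)
  secret := α
  pt_ne_secret j h := hbot ⟨pt j, OnePoint.coe_injective h⟩
  proj j := φ.toAddMonoidHom.comp <|
    AddMonoidHom.mulLeft ((minpolyDiv F α).eval (algebraMap F E (pt j)))
  evalForm_eq_zero G hG h :=
    eval_eq_zero_of_dual_minpolyDiv_mul_eval_eq_zero hα htop hφ hpt (by omega) fun j => by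
      rw [eval_mul]
      exact h j

/-- The scheme whose secret is placed at infinity, which leaves every element of `F` available as a
point of a server. -/
noncomputable def atInfinity (hpt : pt.Injective) (hn : n < Fintype.card κ) :
    CurveScheme n κ F F where
  pt := pt
  secret := ∞
  pt_ne_secret j := OnePoint.coe_ne_infty (pt j)
  proj _ := AddMonoidHom.id F
  evalForm_eq_zero G hG h := by
    rw [eq_zero_of_natDegree_lt_card_of_eval_eq_zero G hpt h (hG.trans_lt hn), map_zero]

end Existence

section Protocol

variable {d t : ℕ} {κ I σ ω E A : Type*} [Field E] [AddCommGroup A]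

/-- The share of server `j` in the secret vector `z` with mask `r`. -/
noncomputable def share {n : ℕ} (P : CurveScheme n κ E A) (z : σ → E) (r : σ → degreeLT E t)
    (j : κ) : σ → E :=
  fun x => (hidingCurve t P.secret (z x) (r x)).eval (P.pt j)

lemma exists_share_add_eq {n : ℕ} (P : CurveScheme n κ E A) {T : Finset κ} (hT : T.card ≤ t)
    (z z' : σ → E) :
    ∃ δ : σ → degreeLT E t, ∀ r, ∀ j ∈ T, P.share z' (r + δ) j = P.share z r j := by
  classical
  have hcard : (T.image P.pt).card ≤ t := Finset.card_image_le.trans hT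
  have hne : ∀ a ∈ T.image P.pt, (a : OnePoint E) ≠ P.secret :=
    Finset.forall_mem_image.2 fun j _ => P.pt_ne_secret j
  choose δ hδ using fun x => exists_eval_hidingCurve_add_eq hcard hne (z x) (z' x)
  exact ⟨δ, fun r j hj => funext fun x => hδ x (r x) _ (Finset.mem_image_of_mem _ hj)⟩

variable [Fintype I]

/-- The answer of server `j` to the query `y`: every coordinate of the records is encoded as a form
of its own. -/
def answer {n : ℕ} (P : CurveScheme n κ E A) (S : I → Set.powersetCard σ d) (j : κ)
    (D : I → ω → E) (y : σ → E) : ω → A :=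
  fun c => P.proj j (databaseForm S (fun i => D i c) y)

lemma eq_of_proj_databaseForm_eq (P : CurveScheme (d * t) κ E A) {S : I → Set.powersetCard σ d}
    (hS : S.Injective) (i : I) (r : σ → degreeLT E t) {D D' : I → E}
    (h : ∀ j, P.proj j (databaseForm S D (P.share (Set.indicator (S i : Set σ) 1) r j)) =
      P.proj j (databaseForm S D' (P.share (Set.indicator (S i : Set σ) 1) r j))) :
    D i = D' i := by
  set z : σ → E := Set.indicator (S i : Set σ) 1
  let f : σ → E[X] := fun x => hidingCurve t P.secret (z x) (r x)
  have hf : ∀ x, (f x).natDegree ≤ t := fun x => natDegree_hidingCurve_le _ _ _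
  have hproj (j : κ) : P.proj j ((databaseForm S (D - D') f).eval (P.pt j)) = 0 := by
    rw [eval_databaseForm, databaseForm_sub, map_sub]
    exact sub_eq_zero.2 (h j)
  have hzero : databaseForm S (D - D') z = 0 := by
    have := P.evalForm_eq_zero _ (natDegree_databaseForm_le S (D - D') hf) hproj
    simpa only [evalForm_databaseForm S _ P.secret hf, f, evalForm_hidingCurve] using this
  rw [databaseForm_indicator hS] at hzero
  exact sub_eq_zero.1 hzero

/-- The protocol in which the client shares the indicator vector of the set indexing the requested
record. -/
noncomputable def protocol (P : CurveScheme (d * t) κ E A) (S : I ↪ Set.powersetCard σ d) :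
    PIRProtocol t κ I (ω → E) (σ → degreeLT E t) (σ → E) (ω → A) :=
  .ofPerm (fun i r => P.share (Set.indicator (S i : Set σ) 1) r) (P.answer S)
    (fun i r _ _ h => funext fun c =>
      P.eq_of_proj_databaseForm_eq S.injective i r fun j => congrFun (congrFun h j) c)
    fun _ hT _ _ =>
      let ⟨δ, hδ⟩ := P.exists_share_add_eq hT _ _
      ⟨Equiv.addRight δ, hδ⟩

end Protocol

end CurveScheme

lemma exists_curveScheme {n k : ℕ} (hk : 1 < k) (hn : n < k) :
    ∃ (E A : Type) (_ : Field E) (_ : AddCommGroup A) (_ : CurveScheme n (Fin k) E A),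
      Nat.card E = 2 ^ ((k - n) * Nat.clog 2 k) ∧ Nat.card A = 2 ^ Nat.clog 2 k := by
  let F := GaloisField 2 (Nat.clog 2 k)
  have hF : Nat.card F = 2 ^ Nat.clog 2 k := GaloisField.card 2 _ (Nat.clog_pos one_lt_two hk).ne'
  obtain ⟨pt⟩ : Nonempty (Fin k ↪ F) := by
    have := Fintype.ofFinite F
    refine Function.Embedding.nonempty_of_card_le ?_
    rw [Fintype.card_fin, ← Nat.card_eq_fintype_card, hF]
    exact Nat.le_pow_clog one_lt_two k
  obtain hs | hs : k - n = 1 ∨ 1 < k - n := by omega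
  · exact ⟨F, F, inferInstance, inferInstance, .atInfinity pt.injective (by simpa using hn),
      by rw [hF, hs, one_mul], hF⟩
  · have : NeZero (k - n) := ⟨by omega⟩
    let E := FiniteField.Extension F 2 (k - n)
    obtain ⟨α, htop⟩ := Field.exists_primitive_element_of_finite_top F E
    have hα : IsIntegral F α := .of_finite F α
    have hdegree : (minpoly F α).natDegree = k - n := by
      rw [(Field.primitive_element_iff_minpoly_natDegree_eq F α).1 htop,
        FiniteField.finrank_extension]
    have hbot : α ∉ Set.range (algebraMap F E) := fun h =>
      hs.ne' (hdegree.symm.trans (minpoly.natDegree_eq_one_iff.2 h))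
    obtain ⟨φ, hφ⟩ := exists_ne (0 : Dual F E)
    refine ⟨E, F, inferInstance, inferInstance,
      .ofPrimitiveElement hα htop hbot hφ pt.injective ?_, ?_, hF⟩
    · rw [hdegree, Fintype.card_fin]
      omega
    · rw [FiniteField.natCard_extension, hF, ← pow_mul, mul_comm]

lemma nonempty_embedding_powersetCard {N m d : ℕ} (h : N ≤ m.choose d) :
    Nonempty (Fin N ↪ Set.powersetCard (Fin m) d) := by
  have := Fintype.ofFinite (Set.powersetCard (Fin m) d)
  refine Function.Embedding.nonempty_of_card_le ?_
  rwa [Fintype.card_fin, ← Nat.card_eq_fintype_card, Set.powersetCard.card, Nat.card_fin]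

lemma nonempty_fun_equiv_bits {B : Type*} {a n b : ℕ} (hB : Nat.card B = 2 ^ a) (hb : b = n * a) :
    Nonempty ((Fin n → B) ≃ (Fin b → Bool)) := by
  have : Finite B := Nat.finite_of_card_ne_zero (by simp [hB])
  refine Finite.card_eq.1 ?_
  rw [Nat.card_fun, hB, Nat.card_fun, Nat.card_fin, Nat.card_fin, Nat.card_eq_fintype_card,
    Fintype.card_bool, hb, mul_comm, pow_mul]

end HighRatePIR

open HighRatePIR Polynomial

/-- **PIR with sublinear upload cost and high download rate.**
For all positive integers `d, t, k, w` with `dt + 1 ≤ k`, there is a `t`-private `k`-server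
PIR protocol for databases of `N` records, each record a string of
`w·(k−dt)·⌈log₂ k⌉` bits, with download cost exactly `w·k·⌈log₂ k⌉` bits (hence download
rate `1 − dt/k`) and total upload cost at most `k·m·(k−dt)²·⌈log₂ k⌉` bits, where `m` is
the smallest positive integer with `N ≤ binom(m,d)`.  The protocol consists of a
randomized query algorithm (randomness uniform over `Fin ρ`), local answer functions, and
a reconstruction function; correctness holds for every database, index and randomness,
and `t`-privacy says any `≤ t` servers' queries are identically distributed for all
retrieved indices. -/
theorem pir_sublinear_upload_high_rate (d t k w N : ℕ)
    (hd : 0 < d) (ht : 0 < t) (hw : 0 < w) (hN : 0 < N) (hk : d * t + 1 ≤ k)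
    (m : ℕ) (hm : 0 < m) (hmN : N ≤ m.choose d)
    (hmin : ∀ m' : ℕ, 0 < m' → N ≤ m'.choose d → m ≤ m') :
    ∃ (ρ : ℕ) (u β : Fin k → ℕ)
      (query : Fin N → Fin ρ → ∀ j : Fin k, Fin (u j) → Bool)
      (answer : ∀ j : Fin k,
        (Fin N → Fin (w * (k - d * t) * Nat.clog 2 k) → Bool) →
        (Fin (u j) → Bool) → (Fin (β j) → Bool))
      (recon : Fin N → Fin ρ → (∀ j : Fin k, Fin (β j) → Bool) →
        (Fin (w * (k - d * t) * Nat.clog 2 k) → Bool)),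
      0 < ρ ∧
      -- correctness: the client always recovers the requested record
      (∀ (D : Fin N → Fin (w * (k - d * t) * Nat.clog 2 k) → Bool) (i : Fin N) (r : Fin ρ),
        recon i r (fun j => answer j D (query i r j)) = D i) ∧
      -- t-privacy: the joint queries of any ≤ t servers are identically distributed
      (∀ T : Finset (Fin k), T.card ≤ t → ∀ i i' : Fin N,
        ∀ v : ∀ j : ↥T, Fin (u j.1) → Bool,
          Nat.card {r : Fin ρ // (fun j : ↥T => query i r j.1) = v} =
            Nat.card {r : Fin ρ // (fun j : ↥T => query i' r j.1) = v}) ∧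
      -- upload cost
      (∑ j, u j ≤ k * m * (k - d * t) ^ 2 * Nat.clog 2 k) ∧
      -- download cost
      (∑ j, β j = w * k * Nat.clog 2 k) := by
  obtain ⟨E, A, _, _, P, hE, hA⟩ :=
    exists_curveScheme ((Nat.succ_le_succ (Nat.mul_pos hd ht)).trans hk) hk
  obtain ⟨S⟩ := nonempty_embedding_powersetCard hmN
  have : Finite E := Nat.finite_of_card_ne_zero (by simp [hE])
  have : Finite (degreeLT E t) := Finite.of_equiv _ (degreeLTEquiv E t).symm.toEquiv
  obtain ⟨eY⟩ := nonempty_fun_equiv_bits (n := w) hE (mul_assoc w (k - d * t) (Nat.clog 2 k))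
  obtain ⟨eQ⟩ := nonempty_fun_equiv_bits (n := m) hE rfl
  obtain ⟨eA⟩ := nonempty_fun_equiv_bits (n := w) hA rfl
  let protocol := (P.protocol S).congr eY (Finite.equivFin (Fin m → degreeLT E t)) eQ eA
  refine ⟨_, fun _ => m * ((k - d * t) * Nat.clog 2 k), fun _ => w * Nat.clog 2 k,
    protocol.query, protocol.answer, protocol.recon, Nat.card_pos, protocol.recon_answer,
    protocol.card_query_eq, ?_, ?_⟩
  · calc ∑ _ : Fin k, m * ((k - d * t) * Nat.clog 2 k)
        = k * m * (k - d * t) * Nat.clog 2 k := by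
          rw [Fin.sum_const, smul_eq_mul]
          ring
      _ ≤ k * m * (k - d * t) ^ 2 * Nat.clog 2 k := by
        gcongr
        exact Nat.le_self_pow two_ne_zero _
  · rw [Fin.sum_const, smul_eq_mul]
    ring
end

section
/- Let t, k, d, m, ℓ be positive integers with m ≥ d and let F be a finite field. Let Π be a t-private k-server linear HSS for POLY_{d,m}(F)^ℓ, i.e.: an F-linear sharing map Share : F × F^e → F^{c_1} × ⋯ × F^{c_k} applied independently to each of the ℓm inputs; arbitrary evaluation functions Eval_j mapping (f_1,…,f_ℓ) ∈ POLY_{d,m}(F)^ℓ and server j's input shares to F^{b_j}; and, for each tuple (f_1,…,f_ℓ), an F-linear reconstruction map Rec : F^{b_1} × ⋯ × F^{b_k} → F^ℓ, such that for all function tuples, all inputs, and all sharing randomness, Rec of the k output shares equals (f_1(x_1),…,f_ℓ(x_ℓ)), and such that for every T ⊆ [k] with |T| ≤ t the joint distribution of the T-servers' shares of any single input is independent of that input. Then dt < k, and the download cost satisfies b_1 + ⋯ + b_k ≥ kℓ/(k − dt) field elements (i.e., at least kℓ·log₂|F|/(k−dt) bits); consequently the download rate of Π is at most 1 − dt/k.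 -/
/-!
Fix a set `S` of at most `d * t` servers and evaluate the monomial `x_1 ⋯ x_d` in every slot. Cover
`S` by classes `T_1, …, T_d` of at most `t` servers each. Privacy provides, for every `q`, a sharing
of `1` that looks to the servers in `T_q` like one fixed sharing of `0`. Feed the indicator vectors
of the sets `A ⊆ [d]` into one slot, shared in this way, and take the alternating sum over `A` of
the output shares. A server in `T_q` cannot tell whether `q ∈ A`, so its contributions cancel in
pairs and the alternating sum vanishes on `S`. But the monomial is nonzero only at `A = [d]`, so
the linear reconstruction maps the alternating sum to `±` a standard basis vector. Hence
reconstruction remains onto when the outputs of `S` are set to zero, and the servers outside `S`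
send at least `ℓ` elements. If `k ≤ d * t`, then `S` could be the set of all servers; otherwise
average over all `S` of size `d * t`.
-/

open scoped BigOperators

section Finset

open Finset

lemma sum_powerset_neg_one_pow_card_smul_eq_zero {α M : Type*} [DecidableEq α] [AddCommGroup M]
    {s : Finset α} {q : α} (hq : q ∈ s) {g : Finset α → M}
    (hg : ∀ A ⊆ s.erase q, g (insert q A) = g A) :
    ∑ A ∈ s.powerset, (-1 : ℤ) ^ #A • g A = 0 := by
  rw [← insert_erase hq, sum_powerset_insert (notMem_erase q s), ← sum_add_distrib]
  refine sum_eq_zero fun A hA ↦ ?_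
  rw [mem_powerset] at hA
  rw [hg A hA, card_insert_of_notMem fun h ↦ notMem_erase q s (hA h), pow_succ]
  simp

lemma exists_subset_biUnion_card_le {α ι : Type*} [DecidableEq α] {S : Finset α}
    {D : Finset ι} {t : ℕ} (h : #S ≤ #D * t) :
    ∃ T : ι → Finset α, (∀ q, #(T q) ≤ t) ∧ S ⊆ D.biUnion T := by
  classical
  obtain ⟨φ⟩ : Nonempty (S ↪ D × Fin t) :=
    Function.Embedding.nonempty_of_card_le (by simpa using h)
  refine ⟨fun q ↦ {j ∈ S.attach | (φ j).1 = q}.map (Function.Embedding.subtype _),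
    fun q ↦ ?_, fun j hj ↦ ?_⟩
  · have hinj : Set.InjOn (fun j ↦ (φ j).2) ({j ∈ S.attach | (φ j).1 = q} : Finset S) := by
      intro a ha b hb hab
      simp only [coe_filter, mem_attach, true_and, Set.mem_ofPred_eq] at ha hb
      exact φ.injective (Prod.ext (Subtype.ext (ha.trans hb.symm)) hab)
    simpa using card_le_card_of_injOn _ (fun j _ ↦ mem_univ (φ j).2) hinj
  · exact mem_biUnion.2 ⟨(φ ⟨j, hj⟩).1, (φ ⟨j, hj⟩).1.2, by simpa using hj⟩

lemma sum_powersetCard_sum {α M : Type*} [AddCommMonoid M] (s : Finset α) (w : α → M)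
    {n : ℕ} (hn : n ≠ 0) :
    ∑ U ∈ s.powersetCard n, ∑ j ∈ U, w j = (#s - 1).choose (n - 1) • ∑ j ∈ s, w j := by
  classical
  have hcomm : ∑ U ∈ s.powersetCard n, ∑ j ∈ U, w j =
      ∑ j ∈ s, ∑ _ ∈ {U ∈ s.powersetCard n | {j} ⊆ U}, w j := by
    refine sum_comm' fun U j ↦ ?_
    simp only [mem_filter, mem_powersetCard, singleton_subset_iff]
    exact ⟨fun h ↦ ⟨h, h.1.1 h.2⟩, fun h ↦ h.1⟩
  rw [hcomm, smul_sum]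
  refine sum_congr rfl fun j hj ↦ ?_
  rw [sum_const, card_filter_powersetCard_subset _ _ _ (by simpa using hj)
    (by simpa using Nat.one_le_iff_ne_zero.2 hn), card_singleton]

lemma card_mul_le_mul_sum_of_forall_card_eq {α K : Type*} [CommSemiring K] [LinearOrder K]
    [IsStrictOrderedRing K] {s : Finset α} {n : ℕ} (hn : n ≤ #s) {l : K} {w : α → K}
    (h : ∀ U ⊆ s, #U = n → l ≤ ∑ j ∈ U, w j) :
    #s * l ≤ n * ∑ j ∈ s, w j := by
  rcases n with _ | n
  · have hl : l ≤ 0 := by simpa using h ∅ (empty_subset s) card_empty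
    simpa using mul_nonpos_of_nonneg_of_nonpos (Nat.cast_nonneg #s) hl
  obtain ⟨k, hk⟩ : ∃ k, #s = k + 1 := Nat.exists_eq_add_one.2 (by omega)
  have hsum : (#s).choose (n + 1) * l ≤ k.choose n * ∑ j ∈ s, w j := by
    calc ((#s).choose (n + 1) : K) * l = ∑ _ ∈ s.powersetCard (n + 1), l := by simp
      _ ≤ ∑ U ∈ s.powersetCard (n + 1), ∑ j ∈ U, w j :=
          sum_le_sum fun U hU ↦ h U (mem_powersetCard.1 hU).1 (mem_powersetCard.1 hU).2
      _ = k.choose n * ∑ j ∈ s, w j := by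
          rw [sum_powersetCard_sum s w n.succ_ne_zero, hk, nsmul_eq_mul, Nat.add_sub_cancel,
            Nat.succ_sub_one]
  have hchoose : (#s * k.choose n : K) = (#s).choose (n + 1) * (n + 1 : ℕ) := by
    rw [hk]; exact_mod_cast Nat.add_one_mul_choose_eq k n
  have hpos : (0 : K) < (#s).choose (n + 1) := by exact_mod_cast Nat.choose_pos hn
  refine le_of_mul_le_mul_left ?_ hpos
  calc ((#s).choose (n + 1) : K) * (#s * l) = #s * ((#s).choose (n + 1) * l) := by ring
    _ ≤ #s * (k.choose n * ∑ j ∈ s, w j) := by gcongr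
    _ = (#s).choose (n + 1) * ((n + 1 : ℕ) * ∑ j ∈ s, w j) := by
        rw [← mul_assoc, hchoose, mul_assoc]

end Finset

section Dimension

open Module

variable {R κ : Type*} [Ring R] [Fintype κ] [DecidableEq κ] {V : κ → Type*}
  [∀ j, AddCommGroup (V j)] [∀ j, Module R (V j)]

/-- The families that vanish on `S`, written as `Submodule.pi S ⊥`, are the same as the families on
the complement of `S`. -/
def piBotEquiv (S : Finset κ) :
    Submodule.pi (S : Set κ) (fun j ↦ (⊥ : Submodule R (V j))) ≃ₗ[R]
      ∀ j : ((Sᶜ : Finset κ) : Set κ), V j :=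
  (LinearEquiv.ofEq _ (⨅ j ∈ (S : Set κ), LinearMap.ker (LinearMap.proj j)) (by ext; simp)).trans
    (LinearMap.iInfKerProjEquiv R V (by simpa using disjoint_compl_left) (by simp))

variable [StrongRankCondition R] [∀ j, Module.Free R (V j)] [∀ j, Module.Finite R (V j)]

lemma finrank_pi_bot (S : Finset κ) :
    finrank R (Submodule.pi (S : Set κ) fun j ↦ (⊥ : Submodule R (V j))) =
      ∑ j ∈ Sᶜ, finrank R (V j) := by
  rw [(piBotEquiv S).finrank_eq, finrank_pi_fintype]
  exact Finset.sum_coe_sort Sᶜ fun j ↦ finrank R (V j)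

lemma finrank_le_sum_compl_of_map_pi_bot_eq_top {W : Type*} [AddCommGroup W] [Module R W]
    (S : Finset κ) (g : (∀ j, V j) →ₗ[R] W)
    (hg : (Submodule.pi (S : Set κ) fun j ↦ (⊥ : Submodule R (V j))).map g = ⊤) :
    finrank R W ≤ ∑ j ∈ Sᶜ, finrank R (V j) := by
  have hfin : Module.Finite R (Submodule.pi (S : Set κ) fun j ↦ (⊥ : Submodule R (V j))) :=
    Module.Finite.equiv (piBotEquiv S).symm
  rw [← finrank_top R W, ← hg, ← finrank_pi_bot (R := R)]
  exact Submodule.finrank_map_le g _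

end Dimension

section Sharing

open Finset

/-- Possibilistic `t`-privacy of a randomized sharing map: whatever at most `t` servers see in a
sharing of one secret, they can also see in a sharing of any other secret. For finite randomness it
follows from perfect privacy (`isHiding_of_card_eq`), and unlike the latter, stated by counting, it
is also meaningful for infinite randomness. -/
def IsHiding {X Ω κ : Type*} {σ : κ → Type*} (t : ℕ) (share : X × Ω → ∀ j, σ j) : Prop :=
  ∀ T : Finset κ, #T ≤ t → ∀ (x x' : X) (r : Ω), ∃ r', ∀ j ∈ T, share (x', r') j = share (x, r) j

lemma isHiding_of_card_eq {X Ω κ : Type*} [Finite Ω] {σ : κ → Type*} {t : ℕ}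
    {share : X × Ω → ∀ j, σ j}
    (h : ∀ T : Finset κ, #T ≤ t → ∀ x x' : X, ∀ v : ∀ j : T, σ j,
      Nat.card {r : Ω // (fun j : T ↦ share (x, r) j) = v} =
        Nat.card {r : Ω // (fun j : T ↦ share (x', r) j) = v}) :
    IsHiding t share := by
  intro T hT x x' r
  have : Nonempty {s : Ω // (fun j : T ↦ share (x, s) j) = fun j : T ↦ share (x, r) j} :=
    ⟨⟨r, rfl⟩⟩
  have hpos := Nat.card_pos (α := {s : Ω // (fun j : T ↦ share (x, s) j) =
    fun j : T ↦ share (x, r) j})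
  rw [h T hT x x'] at hpos
  obtain ⟨⟨r', hr'⟩⟩ := (Nat.card_pos_iff.1 hpos).1
  exact ⟨r', fun j hj ↦ congrFun hr' ⟨j, hj⟩⟩

variable {R Ω ι τ : Type*}

/-- The inputs, each paired with its sharing randomness, that spell out the indicator vector of `A`
in slot `i₀` and are zero in all other slots: a one at position `p` is shared with randomness `ρ p`,
and every zero with randomness `r₀`. -/
def indicatorInput [DecidableEq ι] [DecidableEq τ] [Zero R] [One R] (r₀ : Ω)
    (ρ : τ → Ω) (i₀ : ι) (A : Finset τ) : ι → τ → R × Ω :=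
  fun i p ↦ if i = i₀ ∧ p ∈ A then (1, ρ p) else (0, r₀)

lemma prod_indicatorInput_fst [DecidableEq ι] [DecidableEq τ] [CommSemiring R] (r₀ : Ω)
    (ρ : τ → Ω) (i₀ : ι) {A D : Finset τ} (hD : D.Nonempty) (hA : A ⊆ D) :
    (fun i ↦ ∏ p ∈ D, (indicatorInput r₀ ρ i₀ A i p).1) =
      if A = D then Pi.single i₀ (1 : R) else 0 := by
  have hfst (i p) : (indicatorInput r₀ ρ i₀ A i p).1 = if i = i₀ ∧ p ∈ A then (1 : R) else 0 :=
    apply_ite Prod.fst _ _ _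
  simp only [hfst]
  funext i
  by_cases hi : i = i₀
  · subst hi
    split_ifs with hAD
    · rw [hAD, Pi.single_eq_same]
      exact prod_eq_one fun p hp ↦ by simp [hp]
    · obtain ⟨p, hpD, hpA⟩ := exists_of_ssubset (hA.ssubset_of_ne hAD)
      exact prod_eq_zero hpD (by simp [hpA])
  · obtain ⟨p, hp⟩ := hD
    rw [prod_eq_zero hp (by simp [hi])]
    split_ifs <;> simp [hi]

lemma share_indicatorInput_insert [DecidableEq ι] [DecidableEq τ] [Zero R] [One R] {κ : Type*}
    {σ : κ → Type*} {share : R × Ω → ∀ j, σ j} {r₀ : Ω} {ρ : τ → Ω} {q : τ} {j : κ}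
    (h : share (1, ρ q) j = share (0, r₀) j) (i₀ : ι) (A : Finset τ) (i : ι) (p : τ) :
    share (indicatorInput r₀ ρ i₀ (insert q A) i p) j =
      share (indicatorInput r₀ ρ i₀ A i p) j := by
  simp only [indicatorInput]
  rcases eq_or_ne p q with rfl | hpq
  · split_ifs <;> simp [h]
  · simp [hpq]

variable [CommRing R] [Nonempty Ω] {κ : Type*} {σ V : κ → Type*} [∀ j, AddCommGroup (V j)]
  [∀ j, Module R (V j)] {t : ℕ} {share : R × Ω → ∀ j, σ j} {eval : ∀ j, (ι → τ → σ j) → V j}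
  {recon : (∀ j, V j) →ₗ[R] (ι → R)} {D : Finset τ} {S : Finset κ}

lemma single_mem_map_pi_bot_of_isHiding [DecidableEq ι] (hshare : IsHiding t share)
    (hD : D.Nonempty)
    (hcorrect : ∀ x : ι → τ → R × Ω,
      recon (fun j ↦ eval j fun i p ↦ share (x i p) j) = fun i ↦ ∏ p ∈ D, (x i p).1)
    (hS : #S ≤ #D * t) (i₀ : ι) :
    Pi.single i₀ 1 ∈ (Submodule.pi (S : Set κ) fun j ↦ (⊥ : Submodule R (V j))).map recon := by
  classical
  obtain ⟨T, hT, hST⟩ := exists_subset_biUnion_card_le hS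
  obtain ⟨r₀⟩ := ‹Nonempty Ω›
  choose ρ hρ using fun q ↦ hshare (T q) (hT q) 0 1 r₀
  let y (A : Finset τ) (j : κ) : V j := eval j fun i p ↦ share (indicatorInput r₀ ρ i₀ A i p) j
  have hvanish : ∀ j ∈ S, ∑ A ∈ D.powerset, (-1 : ℤ) ^ #A • y A j = 0 := by
    intro j hj
    obtain ⟨q, hqD, hjq⟩ := mem_biUnion.1 (hST hj)
    refine sum_powerset_neg_one_pow_card_smul_eq_zero hqD fun A _ ↦ ?_
    simp only [y, share_indicatorInput_insert (hρ q j hjq)]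
  have hrecon : ∀ A ∈ D.powerset, recon (y A) = if A = D then Pi.single i₀ 1 else 0 :=
    fun A hA ↦ (hcorrect _).trans (prod_indicatorInput_fst r₀ ρ i₀ hD (mem_powerset.1 hA))
  refine ⟨(-1 : ℤ) ^ #D • ∑ A ∈ D.powerset, (-1 : ℤ) ^ #A • y A, fun j hj ↦ ?_, ?_⟩
  · simp [hvanish j hj]
  · calc recon ((-1 : ℤ) ^ #D • ∑ A ∈ D.powerset, (-1 : ℤ) ^ #A • y A)
        = (-1 : ℤ) ^ #D • ∑ A ∈ D.powerset,
            (-1 : ℤ) ^ #A • if A = D then Pi.single i₀ (1 : R) else 0 := by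
          simp only [map_zsmul, map_sum]
          rw [sum_congr rfl fun A hA ↦ by rw [hrecon A hA]]
      _ = ((-1 : ℤ) ^ #D * (-1) ^ #D) • Pi.single i₀ (1 : R) := by simp [mul_smul]
      _ = Pi.single i₀ 1 := by rw [← mul_pow]; simp

lemma card_le_sum_compl_finrank_of_isHiding [Nontrivial R] [Fintype ι] [Fintype κ]
    [DecidableEq κ] [∀ j, Module.Free R (V j)] [∀ j, Module.Finite R (V j)]
    (hshare : IsHiding t share) (hD : D.Nonempty)
    (hcorrect : ∀ x : ι → τ → R × Ω,
      recon (fun j ↦ eval j fun i p ↦ share (x i p) j) = fun i ↦ ∏ p ∈ D, (x i p).1)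
    (hS : #S ≤ #D * t) :
    Fintype.card ι ≤ ∑ j ∈ Sᶜ, Module.finrank R (V j) := by
  classical
  rw [← Module.finrank_fintype_fun_eq_card R]
  refine finrank_le_sum_compl_of_map_pi_bot_eq_top S recon (top_unique ?_)
  rw [← (Pi.basisFun R ι).span_eq, Submodule.span_le]
  rintro _ ⟨i, rfl⟩
  rw [Pi.basisFun_apply]
  exact single_mem_map_pi_bot_of_isHiding hshare hD hcorrect hS i

end Sharing

theorem linear_hss_download_lower_bound_general {R Ω : Type*} [CommRing R] [Nontrivial R]
    [Nonempty Ω] {t k d m ℓ : ℕ} (hd : 0 < d) (hℓ : 0 < ℓ) (hmd : d ≤ m)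
    {σ : Fin k → Type*} {b : Fin k → ℕ} (Share : R × Ω → ∀ j, σ j)
    (Eval : ∀ j : Fin k, (Fin ℓ → {f : MvPolynomial (Fin m) R // f.totalDegree ≤ d}) →
      (Fin ℓ → Fin m → σ j) → (Fin (b j) → R))
    (Rec : (Fin ℓ → {f : MvPolynomial (Fin m) R // f.totalDegree ≤ d}) →
      ((∀ j : Fin k, Fin (b j) → R) →ₗ[R] (Fin ℓ → R)))
    (hcorrect : ∀ (f : Fin ℓ → {f : MvPolynomial (Fin m) R // f.totalDegree ≤ d})
      (x : Fin ℓ → Fin m → R) (r : Fin ℓ → Fin m → Ω),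
      Rec f (fun j ↦ Eval j f (fun i q ↦ Share (x i q, r i q) j)) =
        fun i ↦ MvPolynomial.eval (x i) (f i).1)
    (hpriv : IsHiding t Share) :
    d * t < k ∧ ((k : ℚ) * ℓ) / (k - d * t) ≤ ∑ j, (b j : ℚ) := by
  obtain ⟨D, -, hD⟩ := Finset.exists_subset_card_eq
    (s := (Finset.univ : Finset (Fin m))) (n := d) (by simpa using hmd)
  let f (_ : Fin ℓ) : {f : MvPolynomial (Fin m) R // f.totalDegree ≤ d} :=
    ⟨∏ p ∈ D, MvPolynomial.X p, (MvPolynomial.totalDegree_finsetProd _ _).trans (by simp [hD])⟩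
  have hout (S : Finset (Fin k)) (hS : S.card ≤ d * t) : ℓ ≤ ∑ j ∈ Sᶜ, b j := by
    simpa using card_le_sum_compl_finrank_of_isHiding (eval := fun j ↦ Eval j f)
      (recon := Rec f) (D := D) hpriv (Finset.card_pos.1 (hD ▸ hd))
      (fun x ↦ (hcorrect f (fun i p ↦ (x i p).1) fun i p ↦ (x i p).2).trans (by simp [f]))
      (by rwa [hD])
  have hlt : d * t < k := by
    by_contra! hle
    have hℓ0 : ℓ ≤ 0 := by simpa using hout Finset.univ (by simpa using hle)
    omega
  have havg := card_mul_le_mul_sum_of_forall_card_eq (s := Finset.univ) (n := k - d * t)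
    (l := (ℓ : ℚ)) (w := fun j ↦ (b j : ℚ)) (by simp) fun U _ hU ↦ by
      have hUc : Uᶜ.card ≤ d * t := by rw [Finset.card_compl, Fintype.card_fin]; omega
      simpa only [compl_compl, Nat.cast_sum] using Nat.cast_le (α := ℚ).2 (hout Uᶜ hUc)
  rw [Finset.card_univ, Fintype.card_fin, Nat.cast_sub hlt.le, Nat.cast_mul] at havg
  have hpos : (0 : ℚ) < k - d * t := sub_pos.2 (by exact_mod_cast hlt)
  exact ⟨hlt, (div_le_iff₀' hpos).2 havg⟩

/-- **Download lower bound for linear HSS for low-degree polynomials.**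
Let `Π` be a `t`-private `k`-server linear HSS for `POLY_{d,m}(F)^ℓ` (with `m ≥ d`): an
`F`-linear sharing map applied independently to each of the `ℓm` inputs, arbitrary
evaluation functions producing `b_j` field elements for server `j`, and for each tuple of
polynomials an `F`-linear reconstruction map, with perfect correctness and perfect
`t`-privacy.  Then `dt < k` and the download cost satisfies
`b_1 + ⋯ + b_k ≥ kℓ/(k − dt)` field elements; in particular the download rate is at most
`1 − dt/k`. -/
theorem linear_hss_download_lower_bound (F : Type) [Field F] [Fintype F]
    (t k d m ℓ : ℕ) (ht : 0 < t) (hk : 0 < k) (hd : 0 < d) (hℓ : 0 < ℓ) (hmd : d ≤ m)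
    (e : ℕ) (c : Fin k → ℕ) (b : Fin k → ℕ)
    (Share : (F × (Fin e → F)) →ₗ[F] (∀ j : Fin k, Fin (c j) → F))
    (Eval : ∀ j : Fin k,
      (Fin ℓ → {f : MvPolynomial (Fin m) F // f.totalDegree ≤ d}) →
      (Fin ℓ → Fin m → (Fin (c j) → F)) → (Fin (b j) → F))
    (Rec : (Fin ℓ → {f : MvPolynomial (Fin m) F // f.totalDegree ≤ d}) →
      ((∀ j : Fin k, Fin (b j) → F) →ₗ[F] (Fin ℓ → F)))
    (hcorrect : ∀ (f : Fin ℓ → {f : MvPolynomial (Fin m) F // f.totalDegree ≤ d})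
      (x : Fin ℓ → Fin m → F) (r : Fin ℓ → Fin m → (Fin e → F)),
      Rec f (fun j => Eval j f (fun i q => Share (x i q, r i q) j)) =
        fun i => MvPolynomial.eval (x i) (f i).1)
    (hpriv : ∀ T : Finset (Fin k), T.card ≤ t → ∀ x x' : F,
      ∀ v : ∀ j : ↥T, Fin (c j.1) → F,
        Nat.card {r : Fin e → F // (fun j : ↥T => Share (x, r) j.1) = v} =
          Nat.card {r : Fin e → F // (fun j : ↥T => Share (x', r) j.1) = v}) :
    d * t < k ∧
      ((k : ℚ) * (ℓ : ℚ)) / ((k : ℚ) - (d : ℚ) * (t : ℚ)) ≤ ∑ j, (b j : ℚ) :=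
  linear_hss_download_lower_bound_general hd hℓ hmd Share Eval Rec hcorrect
    (isHiding_of_card_eq hpriv)
end

section
/- Let F be a field, let d, t, k, ℓ be positive integers with ℓ ≥ 1 and t ≤ k, and let b_1 ≤ b_2 ≤ ⋯ ≤ b_k be non-negative integers. Consider the multivariate polynomial ring over F in the variables X_{i,r,S}, indexed by i ∈ [d], r ∈ [ℓ], and t-element subsets S ⊆ [k]. Suppose that for each j ∈ [k] there are polynomials p^{(j)}_1, …, p^{(j)}_{b_j} in this ring, each involving only variables X_{i,r,S} with j ∉ S, and that for each r ∈ [ℓ] there are scalars v^{(j)}_{r,h} ∈ F with Σ_{j=1}^k Σ_{h=1}^{b_j} v^{(j)}_{r,h} · p^{(j)}_h = Σ_{(S_1,…,S_d)} ∏_{i=1}^d X_{i,r,S_i}, where the sum on the right is over all d-tuples of t-element subsets S_1,…,S_d ⊆ [k]. Then dt < k and ℓ ≤ b_1 + b_2 + ⋯ + b_{k−dt}. -/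
open scoped BigOperators

/-!
Choose `t`-subsets `S_1, …, S_d` that together contain all servers outside a set `T` of `k - dt`
servers, and let `m_r = ∏ i, X (i, r, S_i)`. A server `j` lying in some `S_i` does not see one of
the variables of `m_r`, so `m_r` does not occur in any of its outputs. Comparing the coefficients
of `m_{r'}` in the reconstruction identity for `r` therefore gives `V * P = 1`, where the `ℓ` rows
of `V` are the reconstruction scalars and the columns of `P` are the coefficients of the `m_{r'}`,
both restricted to the outputs of the servers in `T`. Hence `ℓ` is at most the number of those
outputs. If `k ≤ dt`, the same argument applies with `T = ∅` and gives the contradiction `ℓ ≤ 0`.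
-/

open Finset MvPolynomial

section Matrix

variable {R m n : Type*} [CommSemiring R] [Nontrivial R] [Fintype m] [Fintype n] [DecidableEq m]

lemma card_le_card_of_mul_eq_one {V : Matrix m n R} {P : Matrix n m R} (hVP : V * P = 1) :
    Fintype.card m ≤ Fintype.card n :=
  calc
    Fintype.card m = (V * P).rank := by rw [hVP, Matrix.rank_one]
    _ ≤ V.rank := Matrix.rank_mul_le_left V P
    _ ≤ Fintype.card n := V.rank_le_card_width

lemma card_le_card_of_mul_eq_one_of_row_eq_zero {V : Matrix m n R} {P : Matrix n m R}
    (hVP : V * P = 1) {T : Finset n} (hP : ∀ q ∉ T, P.row q = 0) : Fintype.card m ≤ #T := by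
  have hVP_T : V.submatrix id ((↑) : {q // q ∈ T} → n) *
      P.submatrix ((↑) : {q // q ∈ T} → n) id = 1 := by
    rw [← hVP]
    ext r r'
    simp only [Matrix.mul_apply, Matrix.submatrix_apply, id_eq]
    rw [sum_coe_sort T fun q => V r q * P q r']
    refine sum_subset (subset_univ T) fun q _ hq => ?_
    have hPq : P q r' = 0 := congrFun (hP q hq) r'
    rw [hPq, mul_zero]
  simpa only [Fintype.card_coe] using card_le_card_of_mul_eq_one hVP_T

end Matrix

lemma exists_card_eq_cover {I ι : Type*} [Fintype I] [Fintype ι] {t : ℕ}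
    (ht : t ≤ Fintype.card ι) {U : Finset ι} (hU : #U ≤ Fintype.card I * t) :
    ∃ S : I → {S : Finset ι // #S = t}, ∀ j ∈ U, ∃ i, j ∈ (S i).1 := by
  classical
  -- An injection of `U` into `I × Fin t` splits `U` into fibres over `I` of size at most `t`.
  obtain ⟨f⟩ : Nonempty (U ↪ I × Fin t) :=
    Function.Embedding.nonempty_of_card_le (by simpa using hU)
  have card_fibre_le (i : I) : #{j : U | (f j).1 = i} ≤ t := by
    refine (card_le_card_of_injOn (fun j => (f j).2) (fun _ _ => mem_univ _) ?_).trans_eq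
      (card_fin t)
    intro j hj j' hj' hsnd
    simp only [coe_filter, mem_univ, true_and, Set.mem_ofPred_eq] at hj hj'
    exact f.injective (Prod.ext (hj.trans hj'.symm) hsnd)
  choose S hfibre hcard using fun i => exists_superset_card_eq
    ((card_map (Function.Embedding.subtype _)).trans_le (card_fibre_le i)) ht
  exact ⟨fun i => ⟨S i, hcard i⟩, fun j hj =>
    ⟨(f ⟨j, hj⟩).1, hfibre _ (by simp [hj])⟩⟩

section Monomial

variable {R σ I : Type*} [CommSemiring R] [Fintype I]

lemma coeff_eq_zero_of_notMem_vars {p : MvPolynomial σ R} {e : σ →₀ ℕ} {x : σ}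
    (hp : x ∉ p.vars) (he : x ∈ e.support) : coeff e p = 0 := by
  by_contra hne
  exact Finsupp.mem_support_iff.mp he
    (mem_support_notMem_vars_zero (mem_support_iff.mpr hne) hp)

/-- The exponent vector of the monomial `∏ i, X (x i)`, used to extract the coefficients of such
monomials; a variable listed several times by `x` is counted with multiplicity. -/
noncomputable def prodXExponent (x : I → σ) : σ →₀ ℕ :=
  ∑ i, Finsupp.single (x i) 1

lemma prod_X_eq_monomial (x : I → σ) :
    ∏ i, (X (x i) : MvPolynomial σ R) = monomial (prodXExponent x) 1 :=
  (monomial_sum_one univ fun i => Finsupp.single (x i) 1).symm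

lemma mem_support_prodXExponent {x : I → σ} {a : σ} :
    a ∈ (prodXExponent x).support ↔ ∃ i, x i = a := by
  classical
  simp [prodXExponent, Finsupp.finsetSum_apply, Finsupp.single_apply]

variable {L A : Type*} [Nonempty I]

lemma prodXExponent_block_inj {r r' : L} {S S' : I → A} :
    prodXExponent (fun i => (i, r, S i)) = prodXExponent (fun i => (i, r', S' i)) ↔
      r = r' ∧ S = S' := by
  refine ⟨fun h => ?_, by rintro ⟨rfl, rfl⟩; rfl⟩
  have eq_at (i : I) : r = r' ∧ S i = S' i := by
    have hmem : (i, r', S' i) ∈ (prodXExponent fun i => (i, r, S i)).support :=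
      h ▸ mem_support_prodXExponent.mpr ⟨i, rfl⟩
    simpa using mem_support_prodXExponent.mp hmem
  exact ⟨(eq_at (Classical.arbitrary I)).1, funext fun i => (eq_at i).2⟩

lemma coeff_sum_prod_X_block [DecidableEq I] [DecidableEq L] [Fintype A] (r r' : L)
    (S₀ : I → A) :
    coeff (prodXExponent fun i => (i, r', S₀ i))
      (∑ S : I → A, ∏ i, (X (i, r, S i) : MvPolynomial (I × L × A) R)) =
        if r = r' then 1 else 0 := by
  classical
  simp [prod_X_eq_monomial, coeff_sum, coeff_monomial, prodXExponent_block_inj, ite_and]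

variable [DecidableEq I] [Fintype L] [Fintype A] [Nontrivial R] {Q : Type*} [Fintype Q]

lemma card_le_card_of_sum_C_mul_eq_sum_prod_X {p : Q → MvPolynomial (I × L × A) R}
    {v : L → Q → R}
    (hrec : ∀ r, ∑ q, C (v r q) * p q = ∑ S : I → A, ∏ i, X (i, r, S i))
    (S₀ : I → A) {T : Finset Q} (hT : ∀ q ∉ T, ∃ i, ∀ r, (i, r, S₀ i) ∉ (p q).vars) :
    Fintype.card L ≤ #T := by
  classical
  let e (r : L) := prodXExponent fun i => (i, r, S₀ i)
  let V : Matrix L Q R := Matrix.of v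
  let P : Matrix Q L R := Matrix.of fun q r => coeff (e r) (p q)
  have hVP : V * P = 1 := by
    ext r r'
    calc
      (V * P) r r' = coeff (e r') (∑ q, C (v r q) * p q) := by
        simp only [V, P, Matrix.mul_apply, Matrix.of_apply, coeff_sum, coeff_C_mul]
      _ = (1 : Matrix L L R) r r' := by
        rw [hrec r, coeff_sum_prod_X_block, Matrix.one_apply]
  refine card_le_card_of_mul_eq_one_of_row_eq_zero hVP fun q hq => ?_
  obtain ⟨i, hi⟩ := hT q hq
  exact funext fun r => coeff_eq_zero_of_notMem_vars (hi r) (mem_support_prodXExponent.mpr ⟨i, rfl⟩)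

end Monomial

theorem linear_hss_lower_bound_algebraic_general {R I L ι : Type*} [CommSemiring R] [Nontrivial R]
    [Fintype I] [DecidableEq I] [Nonempty I] [Fintype L] [Nonempty L] [Fintype ι]
    {t : ℕ} (ht : t ≤ Fintype.card ι) {H : ι → Type*} [∀ j, Fintype (H j)]
    {p : ∀ j, H j → MvPolynomial (I × L × {S : Finset ι // #S = t}) R}
    (hsupp : ∀ j h, p j h ∈ supported R {q | j ∉ q.2.2.1})
    {v : L → ∀ j, H j → R}
    (hrec : ∀ r, ∑ j, ∑ h, C (v r j h) * p j h =
      ∑ S : I → {S : Finset ι // #S = t}, ∏ i, X (i, r, S i)) :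
    Fintype.card I * t < Fintype.card ι ∧
      ∀ T : Finset ι, Fintype.card ι ≤ Fintype.card I * t + #T →
        Fintype.card L ≤ ∑ j ∈ T, Fintype.card (H j) := by
  classical
  have bound (T : Finset ι) (hT : Fintype.card ι ≤ Fintype.card I * t + #T) :
      Fintype.card L ≤ ∑ j ∈ T, Fintype.card (H j) := by
    obtain ⟨S₀, hS₀⟩ := exists_card_eq_cover (I := I) ht (U := Tᶜ) (by rw [card_compl]; omega)
    have hrec_sigma (r : L) : ∑ q : Σ j, H j, C (v r q.1 q.2) * p q.1 q.2 =
        ∑ S : I → {S : Finset ι // #S = t}, ∏ i, X (i, r, S i) := by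
      rw [Fintype.sum_sigma, hrec]
    refine (card_le_card_of_sum_C_mul_eq_sum_prod_X hrec_sigma S₀
      (T := T.sigma fun _ => univ) fun q hq => ?_).trans_eq (card_sigma _ _)
    obtain ⟨i, hi⟩ := hS₀ q.1 (by simpa using hq)
    exact ⟨i, fun r hvar => mem_supported.mp (hsupp q.1 q.2) hvar hi⟩
  refine ⟨lt_of_not_ge fun hle => ?_, bound⟩
  exact Fintype.card_ne_zero (Nat.le_zero.mp (bound ∅ hle))

/-- **Algebraic core of the linear-HSS download lower bound.**
Variables `X (i, r, S)` are indexed by `i ∈ [d]`, `r ∈ [ℓ]` and `t`-element subsets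
`S ⊆ [k]`.  Suppose server `j` holds polynomials `p j 1, …, p j (b j)` involving only
variables with `j ∉ S` (where `b` is nondecreasing), and for each `r` there are scalars
`v r j h` with `∑_{j,h} v r j h · p j h = ∑_{(S_1,…,S_d)} ∏_i X (i, r, S_i)` (sum over all
`d`-tuples of `t`-subsets).  Then `dt < k` and `ℓ ≤ b_1 + ⋯ + b_{k−dt}` (the sum of the
`k − dt` smallest output sizes). -/
theorem linear_hss_lower_bound_algebraic (F : Type) [Field F]
    (d t k ℓ : ℕ) (hd : 0 < d) (ht : 0 < t) (hk : 0 < k) (hℓ : 0 < ℓ) (htk : t ≤ k)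
    (b : Fin k → ℕ) (hmono : ∀ j j' : Fin k, j ≤ j' → b j ≤ b j')
    (p : ∀ j : Fin k, Fin (b j) →
      MvPolynomial (Fin d × Fin ℓ × {S : Finset (Fin k) // S.card = t}) F)
    (hsupp : ∀ (j : Fin k) (h : Fin (b j)), p j h ∈ MvPolynomial.supported F
      {q : Fin d × Fin ℓ × {S : Finset (Fin k) // S.card = t} | j ∉ q.2.2.1})
    (v : Fin ℓ → ∀ j : Fin k, Fin (b j) → F)
    (hrec : ∀ r : Fin ℓ,
      (∑ j : Fin k, ∑ h : Fin (b j), MvPolynomial.C (v r j h) * p j h) =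
        ∑ S : Fin d → {S : Finset (Fin k) // S.card = t},
          ∏ i : Fin d, MvPolynomial.X (i, r, S i)) :
    d * t < k ∧
      ℓ ≤ ∑ j ∈ Finset.univ.filter (fun j : Fin k => (j : ℕ) < k - d * t), b j := by
  have : NeZero d := ⟨hd.ne'⟩
  have : NeZero ℓ := ⟨hℓ.ne'⟩
  obtain ⟨hdt, bound⟩ := linear_hss_lower_bound_algebraic_general (by simpa using htk) hsupp hrec
  simp only [Fintype.card_fin] at hdt bound
  exact ⟨hdt, bound _ (by rw [Fin.card_filter_val_lt]; omega)⟩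
end

section
/- Let k and t be integers with 0 ≤ t < k, and let b_1, …, b_k be non-negative integers. Let X, Y_1, …, Y_k be random variables on a common finite probability space such that Y_j takes values in {0,1}^{b_j} for each j ∈ [k]. Suppose: (i) for every T ⊆ [k] with |T| ≤ t, the tuple (Y_j)_{j∈T} is independent of X; (ii) there are functions f and g such that the random variable V = f(X) is uniformly distributed on a finite set 𝒴 and g(Y_1,…,Y_k) = V with probability 1. Then b_1 + ⋯ + b_k ≥ k·log₂|𝒴|/(k − t). -/
open scoped BigOperators Classical

/-!
Only supports of distributions matter, not entropies. Fix a set `T` of `t` servers and a value that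
their outputs take with positive probability. By privacy, conditioning on this value does not change
the support of `X`, so every `y ∈ 𝒴` is still decoded from some completion of it by outputs of the
other `k - t` servers `S`. Hence `|𝒴| ≤ 2 ^ ∑ j ∈ S, b j` for every set `S` of `k - t` servers.
Multiplying these bounds over the `k` translates of one such set, for a cyclic group structure on
the servers, counts each server exactly `k - t` times.
-/

section Averaging

lemma prod_prod_add_left_eq_prod_pow_card {G M : Type*} [AddGroup G] [Fintype G] [CommMonoid M]
    (I : Finset G) (w : G → M) :
    ∏ x, ∏ i ∈ I, w (i + x) = (∏ x, w x) ^ I.card := by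
  rw [Finset.prod_comm]
  exact Finset.prod_eq_pow_card fun i _ => Equiv.prod_comp (Equiv.addLeft i) w

lemma pow_card_le_prod_pow_of_forall_card_eq {ι M : Type*} [Fintype ι] [CommMonoid M]
    [PartialOrder M] [IsOrderedMonoid M] {m : ℕ} (hm : m ≤ Fintype.card ι) {w : ι → M} {c : M}
    (h : ∀ S : Finset ι, S.card = m → c ≤ ∏ j ∈ S, w j) :
    c ^ Fintype.card ι ≤ (∏ j, w j) ^ m := by
  cases isEmpty_or_nonempty ι
  · simp
  have : NeZero (Fintype.card ι) := ⟨Fintype.card_ne_zero⟩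
  let _ : AddGroup ι := (Fintype.equivFin ι).addGroup
  obtain ⟨I, -, hI⟩ := Finset.exists_subset_card_eq (s := (Finset.univ : Finset ι)) hm
  have le_translate (x : ι) : c ≤ ∏ i ∈ I, w (i + x) := by
    simpa only [Finset.prod_map, Equiv.coe_toEmbedding, Equiv.coe_addRight] using
      h (I.map (Equiv.addRight x).toEmbedding) (by rw [Finset.card_map, hI])
  calc c ^ Fintype.card ι ≤ ∏ x, ∏ i ∈ I, w (i + x) :=
        Finset.pow_card_le_prod _ _ c fun x _ => le_translate x
    _ = (∏ j, w j) ^ m := by rw [prod_prod_add_left_eq_prod_pow_card, hI]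

end Averaging

section Counting

variable {ι α : Type*} {B : ι → Type*} [Fintype α] [∀ j, Fintype (B j)]
  (g : (∀ j, B j) → α)

lemma card_le_prod_card_of_forall_exists_eq_off (S : Finset ι) (y₀ : ∀ j, B j)
    (h : ∀ a, ∃ z, (∀ j ∉ S, z j = y₀ j) ∧ g z = a) :
    Fintype.card α ≤ ∏ j ∈ S, Fintype.card (B j) := by
  let complete (z : ∀ j : S, B j) (j : ι) : B j := if hj : j ∈ S then z ⟨j, hj⟩ else y₀ j
  have surjective : Function.Surjective (g ∘ complete) := by
    intro a
    obtain ⟨z, hz, rfl⟩ := h a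
    refine ⟨fun j => z j, congrArg g (funext fun j => ?_)⟩
    by_cases hj : j ∈ S
    · exact dif_pos hj
    · exact (dif_neg hj).trans (hz j hj).symm
  calc Fintype.card α ≤ Fintype.card (∀ j : S, B j) := Fintype.card_le_of_surjective _ surjective
    _ = ∏ j ∈ S, Fintype.card (B j) := by
        rw [Fintype.card_pi, Finset.prod_coe_sort S fun j => Fintype.card (B j)]

lemma card_pow_le_prod_card_pow_of_forall_exists_eq_on [Fintype ι] {t : ℕ}
    (ht : t ≤ Fintype.card ι)
    (h : ∀ T : Finset ι, T.card = t →
      ∃ y₀ : ∀ j, B j, ∀ a, ∃ z, (∀ j ∈ T, z j = y₀ j) ∧ g z = a) :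
    Fintype.card α ^ Fintype.card ι ≤ (∏ j, Fintype.card (B j)) ^ (Fintype.card ι - t) := by
  refine pow_card_le_prod_pow_of_forall_card_eq (Nat.sub_le _ t) fun S hS => ?_
  obtain ⟨y₀, hy₀⟩ := h Sᶜ (by rw [Finset.card_compl, hS, Nat.sub_sub_self ht])
  exact card_le_prod_card_of_forall_exists_eq_off g S y₀
    (by simpa only [Finset.mem_compl] using hy₀)

end Counting

section Support

variable {Ω R : Type*} [Fintype Ω]

lemma sum_filter_pos_iff_exists_ne_zero [AddCommMonoid R] [PartialOrder R] [IsOrderedAddMonoid R]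
    {p : Ω → R} (hp : ∀ ω, 0 ≤ p ω) (E : Ω → Prop) [DecidablePred E] :
    0 < ∑ ω with E ω, p ω ↔ ∃ ω, E ω ∧ p ω ≠ 0 := by
  simp [Finset.sum_pos_iff_of_nonneg fun ω _ => hp ω, (hp _).lt_iff_ne']

lemma exists_and_ne_zero_of_sum_filter_eq_mul [Semiring R] [PartialOrder R]
    [IsStrictOrderedRing R] {p : Ω → R} (hp : ∀ ω, 0 ≤ p ω) {E F : Ω → Prop}
    [DecidablePred E] [DecidablePred F]
    (hEF : ∑ ω with E ω ∧ F ω, p ω = (∑ ω with E ω, p ω) * ∑ ω with F ω, p ω)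
    (hE : ∃ ω, E ω ∧ p ω ≠ 0) (hF : ∃ ω, F ω ∧ p ω ≠ 0) :
    ∃ ω, (E ω ∧ F ω) ∧ p ω ≠ 0 := by
  rw [← sum_filter_pos_iff_exists_ne_zero hp] at hE hF ⊢
  exact hEF ▸ mul_pos hE hF

end Support

theorem hss_download_lower_bound_nonlinear_general {ι Ω 𝒳 𝒴 : Type*} {B : ι → Type*}
    [Fintype ι] [Fintype Ω] [Fintype 𝒴] [∀ j, Fintype (B j)] [∀ j, DecidableEq (B j)]
    {t : ℕ} (ht : t < Fintype.card ι)
    {p : Ω → ℝ} (hp0 : ∀ ω, 0 ≤ p ω) (hp1 : ∑ ω, p ω = 1)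
    (X : Ω → 𝒳) (Y : ∀ j, Ω → B j) (f : 𝒳 → 𝒴) (g : (∀ j, B j) → 𝒴)
    (hindep : ∀ T : Finset ι, T.card = t → ∀ (a : 𝒳) (yv : ∀ j : ↥T, B j.1),
      ∑ ω with X ω = a ∧ ∀ j : ↥T, Y j.1 ω = yv j, p ω =
        (∑ ω with X ω = a, p ω) * ∑ ω with ∀ j : ↥T, Y j.1 ω = yv j, p ω)
    (hsupport : ∀ y, 0 < ∑ ω with f (X ω) = y, p ω)
    (hg : ∀ ω, p ω ≠ 0 → g (fun j => Y j ω) = f (X ω)) :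
    Fintype.card ι * Real.logb 2 (Fintype.card 𝒴) / (Fintype.card ι - t) ≤
      ∑ j, Real.logb 2 (Fintype.card (B j)) := by
  obtain ⟨ω₀, -, hω₀⟩ := Finset.exists_ne_zero_of_sum_ne_zero (hp1.trans_ne one_ne_zero)
  have : Nonempty 𝒴 := ⟨f (X ω₀)⟩
  have (j : ι) : Nonempty (B j) := ⟨Y j ω₀⟩
  have decodes_all (T : Finset ι) (hT : T.card = t) (y : 𝒴) :
      ∃ z : ∀ j, B j, (∀ j ∈ T, z j = Y j ω₀) ∧ g z = y := by
    obtain ⟨ω₁, rfl, hω₁⟩ := (sum_filter_pos_iff_exists_ne_zero hp0 _).mp (hsupport y)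
    obtain ⟨ω, ⟨hX, hY⟩, hω⟩ := exists_and_ne_zero_of_sum_filter_eq_mul hp0
      (hindep T hT (X ω₁) fun j => Y j ω₀) ⟨ω₁, rfl, hω₁⟩ ⟨ω₀, fun _ => rfl, hω₀⟩
    exact ⟨fun j => Y j ω, fun j hj => hY ⟨j, hj⟩, by rw [hg ω hω, hX]⟩
  have card_le := card_pow_le_prod_card_pow_of_forall_exists_eq_on g ht.le
    fun T hT => ⟨fun j => Y j ω₀, decodes_all T hT⟩
  have logb_le : Fintype.card ι * Real.logb 2 (Fintype.card 𝒴) ≤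
      (Fintype.card ι - t) * ∑ j, Real.logb 2 (Fintype.card (B j)) := by
    have logb_pow_le := Real.logb_le_logb_of_le one_lt_two
      (by exact_mod_cast pow_pos Fintype.card_pos _) (Nat.cast_le (α := ℝ).mpr card_le)
    rwa [Nat.cast_pow, Nat.cast_pow, Nat.cast_prod, Real.logb_pow, Real.logb_pow, Real.logb_prod,
      Nat.cast_sub ht.le] at logb_pow_le
    exact fun j _ => Nat.cast_ne_zero.mpr Fintype.card_ne_zero
  rw [div_le_iff₀' (sub_pos.mpr (Nat.cast_lt.mpr ht))]
  exact logb_le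

/-- **Information-theoretic download lower bound for general HSS.**
Let `0 ≤ t < k` and let `X, Y_1, …, Y_k` be random variables on a common finite probability
space `(Ω, p)`, with `Y_j` taking values in `{0,1}^{b_j}`.  Suppose (i) for every `T ⊆ [k]`
with `|T| ≤ t` the tuple `(Y_j)_{j∈T}` is independent of `X`, and (ii) there are functions
`f, g` with `V = f(X)` uniform on a finite set `𝒴` and `g(Y_1,…,Y_k) = V` with probability
one.  Then `b_1 + ⋯ + b_k ≥ k·log₂|𝒴| / (k − t)`. -/
theorem hss_download_lower_bound_nonlinear (k t : ℕ) (ht : t < k) (b : Fin k → ℕ)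
    (Ω 𝒳 𝒴 : Type) [Fintype Ω] [Fintype 𝒴] [Nonempty 𝒴]
    (p : Ω → ℝ) (hp0 : ∀ ω, 0 ≤ p ω) (hp1 : ∑ ω, p ω = 1)
    (X : Ω → 𝒳) (Y : ∀ j : Fin k, Ω → (Fin (b j) → Bool))
    (f : 𝒳 → 𝒴) (g : (∀ j : Fin k, Fin (b j) → Bool) → 𝒴)
    (hindep : ∀ T : Finset (Fin k), T.card ≤ t →
      ∀ (a : 𝒳) (yv : ∀ j : ↥T, Fin (b j.1) → Bool),
        (∑ ω ∈ Finset.univ.filter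
            (fun ω => X ω = a ∧ ∀ j : ↥T, Y j.1 ω = yv j), p ω) =
          (∑ ω ∈ Finset.univ.filter (fun ω => X ω = a), p ω) *
            (∑ ω ∈ Finset.univ.filter (fun ω => ∀ j : ↥T, Y j.1 ω = yv j), p ω))
    (huniform : ∀ y : 𝒴,
      (∑ ω ∈ Finset.univ.filter (fun ω => f (X ω) = y), p ω) = 1 / (Fintype.card 𝒴 : ℝ))
    (hg : ∀ ω : Ω, p ω ≠ 0 → g (fun j => Y j ω) = f (X ω)) :
    (k : ℝ) * Real.logb 2 (Fintype.card 𝒴) / ((k : ℝ) - (t : ℝ)) ≤ ∑ j, (b j : ℝ) := by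
  have := hss_download_lower_bound_nonlinear_general (B := fun j => Fin (b j) → Bool)
    (by rwa [Fintype.card_fin]) hp0 hp1 X Y f g (fun T hT => hindep T hT.le)
    (fun y => by rw [huniform]; positivity) hg
  simpa [Real.logb_pow] using this
end

section
/- Let F be a finite field and let k, t, ℓ be positive integers with t < k. Let L be the k-party ℓ-LMSSS over F given by ℓ independent instances of t-private k-party CNF sharing, and let L' = (Share', Rec') be any t-private k-party ℓ-LMSSS over F with parameters (e', b'_1, …, b'_k). Then L is locally convertible to L': there exist functions φ_j (for j ∈ [k]) from party j's CNF shares to F^{b'_j} such that for every secret x = (x_1,…,x_ℓ) ∈ F^ℓ and every choice of CNF additive shares (x_{i,S})_{i∈[ℓ], S∈binom([k],t)} with Σ_S x_{i,S} = x_i for all i, there exists r' ∈ F^{e'} with (φ_1(view_1), …, φ_k(view_k)) = Share'(x, r'), where view_j = (x_{i,S})_{i∈[ℓ], S : j∉S} is party j's CNF share vector. -/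
/-!
Privacy against a set `T` of parties forces every secret `y` to have a sharing in which all of `T`
receives zero: the zero secret with zero randomness is shared as zero, and `T` must not be able to
tell `y` from the zero secret. Given `x = ∑ S, x_S`, choose for each `x_S` a sharing that vanishes
on `S` and add them up. By additivity the result is a sharing of `x`, and its `j`-th component only
depends on the `x_S` with `j ∉ S`, that is, on the view of party `j`.
-/

open scoped BigOperators

/-- Perfect privacy of a secret sharing map against a set `T` of parties: the views of `T` that can
occur do not depend on the secret. Comparing possible views instead of their distributions allows an
infinite randomness space `Ω`; for linear sharing over a finite field it makes no difference, as the
randomness leading to a given view of `T` is empty or a coset of a subspace independent of `x`. -/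
def HidesSecretFrom {P M Ω : Type*} {V : P → Type*} (share : M × Ω → ∀ j, V j) (T : Set P) :
    Prop :=
  ∀ x x' : M, Set.range (fun r => T.domRestrict (share (x, r))) =
    Set.range (fun r => T.domRestrict (share (x', r)))

lemma range_eq_of_natCard_fiber_eq {α β γ : Type*} [Finite α] [Finite β] {f : α → γ} {g : β → γ}
    (h : ∀ c, Nat.card {a // f a = c} = Nat.card {b // g b = c}) : Set.range f = Set.range g := by
  ext c
  rw [Set.mem_range, Set.mem_range, ← nonempty_subtype, ← nonempty_subtype,
    ← Finite.card_pos_iff, ← Finite.card_pos_iff, h c]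

lemma HidesSecretFrom.exists_share_eq_zero {P M Ω : Type*} {V : P → Type*} [Zero M] [Zero Ω]
    [∀ j, Zero (V j)] {share : M × Ω → ∀ j, V j} {T : Set P} (h : HidesSecretFrom share T)
    (share_zero : share 0 = 0) (y : M) : ∃ r, ∀ j ∈ T, share (y, r) j = 0 := by
  have zero_view : T.domRestrict (share (0, 0)) = 0 := congrArg T.domRestrict share_zero
  obtain ⟨r, hr⟩ : (0 : ∀ j : T, V j) ∈ Set.range fun r => T.domRestrict (share (y, r)) :=
    h 0 y ▸ ⟨0, zero_view⟩
  exact ⟨r, fun j hj => congrFun hr ⟨j, hj⟩⟩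

section Conversion

variable {P ι M Ω : Type*} {V : P → Type*} [AddCommMonoid M] [AddCommMonoid Ω]
  [∀ j, AddCommMonoid (V j)] [Fintype ι]

open Classical in
/-- The local conversion applied by party `j` to its CNF view, for CNF sharing in which the `i`-th
additive share is withheld from the parties in `A i`: each known additive share `y` is shared again
with randomness `ρ i y`, and the `j`-th components are added up. -/
noncomputable def cnfConvert (share : M × Ω →+ ∀ j, V j) (A : ι → Set P) (ρ : ι → M → Ω) (j : P)
    (view : {i // j ∉ A i} → M) : V j :=
  ∑ i, share (view i, ρ i (view i)) j

lemma cnfConvert_eq_share_sum {share : M × Ω →+ ∀ j, V j} {A : ι → Set P} {ρ : ι → M → Ω}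
    (hρ : ∀ i y, ∀ j ∈ A i, share (y, ρ i y) j = 0) (xs : ι → M) (j : P) :
    cnfConvert share A ρ j (fun i => xs i) = share (∑ i, xs i, ∑ i, ρ i (xs i)) j := by
  classical
  calc cnfConvert share A ρ j (fun i => xs i)
      = ∑ i, share (xs i, ρ i (xs i)) j :=
        Fintype.sum_of_injective Subtype.val Subtype.val_injective _ _
          (fun i hi => hρ i (xs i) j (by simpa using hi)) fun _ => rfl
    _ = share (∑ i, (xs i, ρ i (xs i))) j := by rw [map_sum, Finset.sum_apply]
    _ = share (∑ i, xs i, ∑ i, ρ i (xs i)) j := by rw [prod_mk_sum]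

theorem cnf_locally_convertible_to_lmsss_general (share : M × Ω →+ ∀ j, V j) (A : ι → Set P)
    (hpriv : ∀ i, HidesSecretFrom share (A i)) :
    ∃ φ : ∀ j, ({i // j ∉ A i} → M) → V j, ∀ (x : M) (xs : ι → M), ∑ i, xs i = x →
      ∃ r : Ω, (fun j => φ j (fun i => xs i)) = share (x, r) := by
  choose ρ hρ using fun i => (hpriv i).exists_share_eq_zero (map_zero share)
  refine ⟨cnfConvert share A ρ, ?_⟩
  rintro _ xs rfl
  exact ⟨∑ i, ρ i (xs i), funext (cnfConvert_eq_share_sum hρ xs)⟩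

end Conversion

/-- **Local share conversion from CNF to any `t`-private LMSSS (Corollary: cdiplusplus).**
Let `L'` = `(Share', Rec')` be any `t`-private `k`-party `ℓ`-LMSSS over a finite field `F`
(with the full party set qualified).  Then `ℓ` independent instances of `t`-private
`k`-party CNF sharing can be locally converted to `L'`: there are functions `φ_j` from party
`j`'s CNF shares to `F^{b'_j}` such that for every secret `x ∈ F^ℓ` and every valid CNF
additive sharing `(x_{i,S})` of it (`∑_S x_{i,S} = x_i`), there is randomness `r'` with
`(φ_1(view_1), …, φ_k(view_k)) = Share'(x, r')`, where `view_j` consists of the shares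
`x_{i,S}` with `j ∉ S`. -/
theorem cnf_locally_convertible_to_lmsss (F : Type) [Field F] [Fintype F]
    (k t ℓ : ℕ) (hk : 0 < k) (ht : 0 < t) (hℓ : 0 < ℓ) (htk : t < k)
    (e' : ℕ) (b' : Fin k → ℕ)
    (Share' : ((Fin ℓ → F) × (Fin e' → F)) →ₗ[F] (∀ j : Fin k, Fin (b' j) → F))
    (Rec' : (∀ j : Fin k, Fin (b' j) → F) →ₗ[F] (Fin ℓ → F))
    (hcorrect : ∀ (x : Fin ℓ → F) (r : Fin e' → F), Rec' (Share' (x, r)) = x)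
    (hpriv : ∀ T : Finset (Fin k), T.card ≤ t → ∀ x x' : Fin ℓ → F,
      ∀ v : ∀ j : ↥T, Fin (b' j.1) → F,
        Nat.card {r : Fin e' → F // (fun j : ↥T => Share' (x, r) j.1) = v} =
          Nat.card {r : Fin e' → F // (fun j : ↥T => Share' (x', r) j.1) = v}) :
    ∃ φ : ∀ j : Fin k,
        (Fin ℓ → ({S : TSubset k t // j ∉ S.1} → F)) → (Fin (b' j) → F),
      ∀ (x : Fin ℓ → F) (xs : Fin ℓ → TSubset k t → F),
        (∀ i, ∑ S, xs i S = x i) →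
        ∃ r' : Fin e' → F,
          (fun j => φ j (fun i S => xs i S.1)) = Share' (x, r') := by
  obtain ⟨φ, hφ⟩ := cnf_locally_convertible_to_lmsss_general Share'.toAddMonoidHom
    (fun S : TSubset k t => (S.1 : Set (Fin k)))
    fun S x x' => range_eq_of_natCard_fiber_eq (hpriv S.1 S.2.le x x')
  exact ⟨fun j view => φ j (Function.swap view), fun x xs hxs =>
    hφ x (Function.swap xs) (funext fun i => (Finset.sum_apply i _ _).trans (hxs i))⟩
end
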